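/- arXiv:1405.5318 — 3 statements merged into one kernel-verified Lean document; each statement's English description precedes it below -/
import Mathlib

section
/- For all τ in the complex upper half-plane, with ζ = ζ(τ) and φ_j = φ_j(τ): φ1¹² = 2⁴(ζ−1)²(ζ+1)⁶/(ζ³(ζ+2)(2ζ+1)), φ2¹² = −ζ⁶(ζ+2)²/(2⁸(ζ+1)³(ζ−1)(2ζ+1)), φ3¹² = (ζ−1)⁴(ζ+2)(2ζ+1)/(3⁶ζ(ζ+1)⁴), φ4¹² = −(ζ−1)(ζ+2)⁴(2ζ+1)/(3⁶ζ⁴(ζ+1)), and φ5⁶ = (ζ−1)(ζ+2)(2ζ+1)/(3³ζ(ζ+1)). -/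
open Complex

/-- The theta product θ(x;p) = ∏_{j≥0} (1 - pʲx)(1 - pʲ⁺¹x⁻¹). -/
noncomputable def jtheta (x p : ℂ) : ℂ :=
  ∏' j : ℕ, ((1 - p ^ j * x) * (1 - p ^ (j + 1) * x⁻¹))

/-- Dedekind's eta function η(τ) = e^{πiτ/12} ∏_{j≥1} (1 - e^{2πijτ}). -/
noncomputable def dedekindEta (τ : ℂ) : ℂ :=
  Complex.exp ((Real.pi : ℂ) * Complex.I * τ / 12) *
    ∏' j : ℕ, (1 - Complex.exp (2 * (Real.pi : ℂ) * Complex.I * (j + 1) * τ))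

/-- The eta quotient φ₁ = η(τ/2)²/η(τ)². -/
noncomputable def phi1 (τ : ℂ) : ℂ := dedekindEta (τ / 2) ^ 2 / dedekindEta τ ^ 2

/-- The eta quotient φ₂ = η(2τ)²/η(τ)². -/
noncomputable def phi2 (τ : ℂ) : ℂ := dedekindEta (2 * τ) ^ 2 / dedekindEta τ ^ 2

/-- The eta quotient φ₃ = η(3τ/2)/η(τ/2). -/
noncomputable def phi3 (τ : ℂ) : ℂ := dedekindEta (3 * τ / 2) / dedekindEta (τ / 2)

/-- The eta quotient φ₄ = η(6τ)/η(2τ). -/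
noncomputable def phi4 (τ : ℂ) : ℂ := dedekindEta (6 * τ) / dedekindEta (2 * τ)

/-- The eta quotient φ₅ = η(3τ)/η(τ). -/
noncomputable def phi5 (τ : ℂ) : ℂ := dedekindEta (3 * τ) / dedekindEta τ

/-- The Hauptmodul ζ(τ) = ω²θ(-1;p²)θ(-pω;p²)/(θ(-p;p²)θ(-ω;p²)),
with p = e^{πiτ} and ω = e^{2πi/3}. -/
noncomputable def hauptmodul (τ : ℂ) : ℂ :=
  let p := Complex.exp ((Real.pi : ℂ) * Complex.I * τ)
  let ω := Complex.exp (2 * (Real.pi : ℂ) * Complex.I / 3)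
  ω ^ 2 * jtheta (-1) (p ^ 2) * jtheta (-(p * ω)) (p ^ 2)
    / (jtheta (-p) (p ^ 2) * jtheta (-ω) (p ^ 2))

open Filter Topology

noncomputable def qp (x q : ℂ) : ℂ := ∏' j : ℕ, (1 - q ^ j * x)

lemma qp_summable {q : ℂ} (hq : ‖q‖ < 1) (x : ℂ) : Summable (fun j : ℕ => ‖-(q ^ j * x)‖) := by
  have : Summable (fun j : ℕ => ‖q‖ ^ j * ‖x‖) :=
    (summable_geometric_of_lt_one (norm_nonneg _) hq).mul_right _
  simpa using this

lemma qp_mult {q : ℂ} (hq : ‖q‖ < 1) (x : ℂ) : Multipliable (fun j : ℕ => 1 - q ^ j * x) := by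
  simpa [sub_eq_add_neg] using multipliable_one_add_of_summable (qp_summable hq x)

lemma qp_ne_zero {q : ℂ} (hq : ‖q‖ < 1) (x : ℂ) (hx : ‖x‖ < 1) : qp x q ≠ 0 := by
  have := tprod_one_add_ne_zero_of_summable (f := fun j : ℕ => -(q ^ j * x)) ?_ (qp_summable hq x)
  · simpa [qp, sub_eq_add_neg] using this
  · intro j h
    have h1 : q ^ j * x = 1 := by linear_combination -h
    have h2 : ‖q ^ j * x‖ = 1 := by rw [h1]; simp
    rw [norm_mul, norm_pow] at h2
    have : ‖q‖ ^ j ≤ 1 := pow_le_one₀ (norm_nonneg _) hq.le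
    nlinarith [norm_nonneg x]

lemma qp_succ {q : ℂ} (hq : ‖q‖ < 1) (x : ℂ) : qp x q = (1 - x) * qp (q * x) q := by
  unfold qp
  rw [tprod_eq_zero_mul']
  · simp [pow_succ, mul_assoc]
  · have := qp_mult hq (q * x)
    simpa [pow_succ, mul_assoc] using this

lemma jtheta_eq {q : ℂ} (hq : ‖q‖ < 1) (x : ℂ) : jtheta x q = qp x q * qp (q * x⁻¹) q := by
  unfold jtheta qp
  rw [← (qp_mult hq x).tprod_mul (qp_mult hq _)]
  simp [pow_succ, mul_assoc]

lemma jtheta_mult {q : ℂ} (hq : ‖q‖ < 1) (x : ℂ) :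
    Multipliable (fun j : ℕ => ((1 - q ^ j * x) * (1 - q ^ (j + 1) * x⁻¹))) := by
  have := (qp_mult hq x).mul (qp_mult hq (q * x⁻¹))
  simpa [pow_succ, mul_assoc] using this

lemma jtheta_symm {q : ℂ} (hq : ‖q‖ < 1) (hq0 : q ≠ 0) {x : ℂ} : jtheta (q * x⁻¹) q = jtheta x q := by
  rw [jtheta_eq hq, jtheta_eq hq, mul_comm]
  congr 2
  field_simp

lemma jtheta_inv {q : ℂ} (hq : ‖q‖ < 1) {x : ℂ} (hx : x ≠ 0) :
    jtheta x⁻¹ q = -x⁻¹ * jtheta x q := by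
  rw [jtheta_eq hq, jtheta_eq hq, qp_succ hq x, qp_succ hq x⁻¹, inv_inv]
  field_simp
  ring

lemma jtheta_shift {q : ℂ} (hq : ‖q‖ < 1) (hq0 : q ≠ 0) {x : ℂ} (hx : x ≠ 0) :
    jtheta (q * x) q = -x⁻¹ * jtheta x q := by
  rw [← jtheta_inv hq hx, ← jtheta_symm hq hq0 (x := x⁻¹), inv_inv]

lemma qp_sq {q : ℂ} (hq : ‖q‖ < 1) (x : ℂ) : qp x q * qp (-x) q = qp (x ^ 2) (q ^ 2) := by
  unfold qp
  rw [← (qp_mult hq x).tprod_mul (qp_mult hq _)]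
  congr 1; ext j; ring

lemma qp_cube {q : ℂ} (hq : ‖q‖ < 1) (x : ℂ) {w : ℂ} (hw : w ^ 2 + w + 1 = 0) :
    qp x q * (qp (x * w) q * qp (x * w ^ 2) q) = qp (x ^ 3) (q ^ 3) := by
  unfold qp
  rw [← (qp_mult hq _).tprod_mul (qp_mult hq _), ← (qp_mult hq _).tprod_mul
    ((qp_mult hq _).mul (qp_mult hq _))]
  congr 1; ext j
  have h2 : w ^ 2 = - w - 1 := by linear_combination hw
  rw [h2, ← pow_mul, mul_comm 3 j, pow_mul]
  generalize q ^ j = t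
  linear_combination (t^2*x^2*(1-t*x)*(-1)) * hw

lemma qp_split {q : ℂ} (hq : ‖q‖ < 1) (x : ℂ) : qp x q = qp x (q ^ 2) * qp (q * x) (q ^ 2) := by
  have hq2 : ‖q ^ 2‖ < 1 := by rw [norm_pow]; exact pow_lt_one₀ (norm_nonneg _) hq two_ne_zero
  unfold qp
  have h1 : (fun j : ℕ => 1 - (q ^ 2) ^ j * x) = fun k : ℕ => (1 - q ^ (2 * k) * x) := by
    ext j; ring
  have h2 : (fun j : ℕ => 1 - (q ^ 2) ^ j * (q * x)) = fun k : ℕ => (1 - q ^ (2 * k + 1) * x) := by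
    ext j; ring
  have m1 := qp_mult hq2 x
  have m2 := qp_mult hq2 (q * x)
  rw [h1] at m1 ⊢
  rw [h2] at m2 ⊢
  exact (tprod_even_mul_odd (f := fun j => 1 - q ^ j * x) m1 m2).symm

/-! Finite triple product -/

noncomputable def poch (P : ℂ) (n : ℕ) : ℂ := ∏ j ∈ Finset.range n, (1 - P ^ (j + 1))

noncomputable def RR (P : ℂ) (m : ℤ) : ℂ := if m < 0 then 0 else (poch P m.toNat)⁻¹

lemma one_sub_ne {P : ℂ} (hP : ‖P‖ < 1) (j : ℕ) : (1 - P ^ (j + 1)) ≠ 0 := by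
  intro h
  have h1 : P ^ (j + 1) = 1 := by linear_combination -h
  have h2 : ‖P ^ (j + 1)‖ < 1 := by
    rw [norm_pow]; exact pow_lt_one₀ (norm_nonneg _) hP (by omega)
  rw [h1] at h2; simp at h2

lemma poch_ne {P : ℂ} (hP : ‖P‖ < 1) (n : ℕ) : poch P n ≠ 0 :=
  Finset.prod_ne_zero_iff.2 fun j _ => one_sub_ne hP j

lemma RR_rec {P : ℂ} (hP : ‖P‖ < 1) (m : ℤ) : RR P (m - 1) = (1 - P ^ m) * RR P m := by
  unfold RR
  rcases lt_trichotomy m 0 with h | h | h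
  · rw [if_pos (by omega), if_pos h]; simp
  · subst h; simp
  · obtain ⟨n, rfl⟩ : ∃ n : ℕ, m = n + 1 := ⟨(m - 1).toNat, by omega⟩
    rw [if_neg (by omega), if_neg (by omega)]
    have e1 : ((n : ℤ) + 1 - 1).toNat = n := by omega
    have e2 : ((n : ℤ) + 1).toNat = n + 1 := by omega
    rw [e1, e2]
    have := one_sub_ne hP n
    have h2 := poch_ne hP n
    have e3 : poch P (n + 1) = poch P n * (1 - P ^ (n + 1)) := by
      simp [poch, Finset.prod_range_succ]
    rw [e3]
    have e4 : P ^ ((n : ℤ) + 1) = P ^ (n + 1) := by norm_cast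
    rw [e4]
    field_simp

noncomputable def cf (p x : ℂ) (k : ℤ) : ℂ := (-1) ^ k * p ^ (k * (k - 1)) * x ^ k

lemma cf_pred {p x : ℂ} (hp : p ≠ 0) (hx : x ≠ 0) (k : ℤ) :
    cf p x (k - 1) * x = - cf p x k * p ^ 2 * ((p ^ k)⁻¹) ^ 2 := by
  unfold cf
  have h1 : p ^ ((k - 1) * (k - 1 - 1)) = p ^ (k * (k - 1)) * p ^ 2 * ((p ^ k)⁻¹) ^ 2 := by
    rw [← zpow_neg, ← zpow_natCast, ← zpow_natCast, ← zpow_mul, ← zpow_add₀ hp, ← zpow_add₀ hp]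
    congr 1; push_cast; ring
  rw [h1, zpow_sub_one₀ hx, zpow_sub_one₀ (by norm_num)]
  field_simp

lemma cf_succ {p x : ℂ} (hp : p ≠ 0) (hx : x ≠ 0) (k : ℤ) :
    cf p x (k + 1) * x⁻¹ = - cf p x k * (p ^ k) ^ 2 := by
  unfold cf
  have h1 : p ^ ((k + 1) * (k + 1 - 1)) = p ^ (k * (k - 1)) * (p ^ k) ^ 2 := by
    rw [← zpow_natCast, ← zpow_mul, ← zpow_add₀ hp]
    congr 1; push_cast; ring
  rw [h1, zpow_add_one₀ hx, zpow_add_one₀ (by norm_num)]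
  field_simp

lemma finite_jtp {p x : ℂ} (hp : p ≠ 0) (hx : x ≠ 0) (hP : ‖p ^ 2‖ < 1) (n : ℕ) :
    HasSum (fun k : ℤ => cf p x k * (poch (p ^ 2) (2 * n) * RR (p ^ 2) (n - k) * RR (p ^ 2) (n + k)))
      (∏ j ∈ Finset.range n, ((1 - (p ^ 2) ^ j * x) * (1 - (p ^ 2) ^ (j + 1) * x⁻¹))) := by
  induction n with
  | zero =>
    have := hasSum_single (f := fun k : ℤ => cf p x k * (poch (p ^ 2) (2 * 0) *
      RR (p ^ 2) ((0 : ℕ) - k) * RR (p ^ 2) ((0 : ℕ) + k))) 0 ?_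
    · simpa [cf, poch, RR] using this
    · intro k hk
      rcases lt_or_gt_of_ne hk with h | h
      · simp [RR, h]
      · simp [RR, h]
  | succ n ih =>
    have h1 := (Equiv.subRight (1 : ℤ)).hasSum_iff.2 ih
    have h2 := (Equiv.addRight (1 : ℤ)).hasSum_iff.2 ih
    have h := ((ih.mul_left (1 + (p ^ 2) ^ (2 * n + 1))).sub (h1.mul_left ((p ^ 2) ^ n * x))).sub
      (h2.mul_left ((p ^ 2) ^ (n + 1) * x⁻¹))
    rw [Finset.prod_range_succ]
    have hF : ∀ F : ℂ, F * ((1 - (p ^ 2) ^ n * x) * (1 - (p ^ 2) ^ (n + 1) * x⁻¹)) =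
        (1 + (p ^ 2) ^ (2 * n + 1)) * F - (p ^ 2) ^ n * x * F - (p ^ 2) ^ (n + 1) * x⁻¹ * F := by
      intro F
      field_simp
      ring
    rw [hF]
    suffices hh : ∀ k : ℤ, cf p x k * (poch (p ^ 2) (2 * (n + 1)) * RR (p ^ 2) ((n + 1 : ℕ) - k) *
        RR (p ^ 2) ((n + 1 : ℕ) + k)) =
      (1 + (p ^ 2) ^ (2 * n + 1)) * (cf p x k * (poch (p ^ 2) (2 * n) * RR (p ^ 2) (n - k) *
          RR (p ^ 2) (n + k))) -
        (p ^ 2) ^ n * x * (cf p x (k - 1) * (poch (p ^ 2) (2 * n) * RR (p ^ 2) (n - (k - 1)) *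
          RR (p ^ 2) (n + (k - 1)))) -
        (p ^ 2) ^ (n + 1) * x⁻¹ * (cf p x (k + 1) * (poch (p ^ 2) (2 * n) * RR (p ^ 2) (n - (k + 1)) *
          RR (p ^ 2) (n + (k + 1)))) by
      rw [funext hh]; exact h
    · intro k
      have a1 : RR (p ^ 2) (n - k) = (1 - (p ^ 2) ^ ((n : ℤ) + 1 - k)) * RR (p ^ 2) (n + 1 - k) := by
        rw [← RR_rec hP]; congr 1; ring
      have a2 : RR (p ^ 2) (n + k) = (1 - (p ^ 2) ^ ((n : ℤ) + 1 + k)) * RR (p ^ 2) (n + 1 + k) := by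
        rw [← RR_rec hP]; congr 1; ring
      have a3 : RR (p ^ 2) (n + (k - 1)) = (1 - (p ^ 2) ^ ((n : ℤ) + k)) * RR (p ^ 2) (n + k) := by
        rw [← RR_rec hP]; congr 1; ring
      have a4 : RR (p ^ 2) (n - (k + 1)) = (1 - (p ^ 2) ^ ((n : ℤ) - k)) * RR (p ^ 2) (n - k) := by
        rw [← RR_rec hP]; congr 1; ring
      have a5 : RR (p ^ 2) (n - (k - 1)) = RR (p ^ 2) (n + 1 - k) := by congr 1; ring
      have a6 : RR (p ^ 2) (n + (k + 1)) = RR (p ^ 2) (n + 1 + k) := by congr 1; ring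
      have hP0 : p ^ 2 ≠ 0 := pow_ne_zero _ hp
      have b0 : (p ^ 2) ^ k = (p ^ k) ^ 2 := by
        rw [← zpow_natCast, ← zpow_natCast, ← zpow_mul, ← zpow_mul, mul_comm]
      have b1 : (p ^ 2) ^ ((n : ℤ) - k) = (p ^ 2) ^ n * ((p ^ k)⁻¹) ^ 2 := by
        rw [zpow_sub₀ hP0, b0, zpow_natCast]; field_simp
      have b2 : (p ^ 2) ^ ((n : ℤ) + k) = (p ^ 2) ^ n * (p ^ k) ^ 2 := by
        rw [zpow_add₀ hP0, b0, zpow_natCast]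
      have b3 : (p ^ 2) ^ ((n : ℤ) + 1 - k) = (p ^ 2) ^ n * p ^ 2 * ((p ^ k)⁻¹) ^ 2 := by
        rw [zpow_sub₀ hP0, b0, zpow_add_one₀ hP0, zpow_natCast]; field_simp
      have b4 : (p ^ 2) ^ ((n : ℤ) + 1 + k) = (p ^ 2) ^ n * p ^ 2 * (p ^ k) ^ 2 := by
        rw [zpow_add₀ hP0, b0, zpow_add_one₀ hP0, zpow_natCast]
      have c1 : poch (p ^ 2) (2 * (n + 1)) = poch (p ^ 2) (2 * n) *
          (1 - ((p ^ 2) ^ n) ^ 2 * p ^ 2) * (1 - ((p ^ 2) ^ n) ^ 2 * (p ^ 2) ^ 2) := by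
        rw [show 2 * (n + 1) = 2 * n + 1 + 1 by ring]
        simp only [poch, Finset.prod_range_succ]
        ring
      have c2 : (p ^ 2) ^ (2 * n + 1) = ((p ^ 2) ^ n) ^ 2 * p ^ 2 := by ring
      have d1 := cf_pred hp hx k
      have d2 := cf_succ hp hx k
      push_cast
      rw [a3, a4, a5, a6, a1, a2, b1, b2, b3, b4, c1, c2, pow_succ (p ^ 2) n]
      have hk : p ^ k ≠ 0 := zpow_ne_zero _ hp
      generalize RR (p ^ 2) (n + 1 - k) = A at *
      generalize RR (p ^ 2) (n + 1 + k) = B at *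
      generalize poch (p ^ 2) (2 * n) = Q at *
      generalize cf p x (k - 1) = C1 at *
      generalize cf p x (k + 1) = C2 at *
      generalize cf p x k = C at *
      generalize (p ^ 2) ^ n = t at *
      generalize p ^ k = s at *
      have e1 : t * x * (C1 * (Q * A * ((1 - t * s ^ 2) * ((1 - t * p ^ 2 * s ^ 2) * B)))) =
        (-C * p ^ 2 * s⁻¹ ^ 2) * (t * (Q * A * ((1 - t * s ^ 2) * ((1 - t * p ^ 2 * s ^ 2) * B)))) := by
        rw [← d1]; ring
      have e2 : t * p ^ 2 * x⁻¹ * (C2 * (Q * ((1 - t * s⁻¹ ^ 2) * ((1 - t * p ^ 2 * s⁻¹ ^ 2) * A)) * B)) =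
        (-C * s ^ 2) * (t * p ^ 2 * (Q * ((1 - t * s⁻¹ ^ 2) * ((1 - t * p ^ 2 * s⁻¹ ^ 2) * A)) * B)) := by
        rw [← d2]; ring
      rw [e1, e2]
      field_simp
      ring

lemma sumG {p : ℂ} (hp : p ≠ 0) (hp1 : ‖p‖ < 1) {y : ℂ} (hy : y ≠ 0) :
    Summable (fun k : ℤ => p ^ (k * k) * y ^ k) := by
  have hpi : (Real.pi : ℂ) ≠ 0 := by exact_mod_cast Real.pi_ne_zero
  set τ : ℂ := Complex.log p / (Real.pi * I) with hτ
  set z : ℂ := Complex.log y / (2 * Real.pi * I) with hz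
  have e1 : Complex.exp (Real.pi * I * τ) = p := by
    rw [hτ, mul_div_cancel₀ _ (mul_ne_zero hpi I_ne_zero), Complex.exp_log hp]
  have e2 : Complex.exp (2 * Real.pi * I * z) = y := by
    rw [hz, mul_div_cancel₀ _ (mul_ne_zero (mul_ne_zero two_ne_zero hpi) I_ne_zero),
      Complex.exp_log hy]
  have him : 0 < τ.im := by
    rw [← e1, Complex.norm_exp, Real.exp_lt_one_iff] at hp1
    have : (Real.pi * I * τ).re = - (Real.pi * τ.im) := by simp
    rw [this] at hp1
    have := Real.pi_pos
    by_contra h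
    nlinarith
  have := (summable_jacobiTheta₂_term_iff z τ).2 him
  refine this.congr fun k => ?_
  rw [jacobiTheta₂_term, Complex.exp_add, mul_comm]
  congr 1
  · rw [← e1, ← Complex.exp_int_mul]; congr 1; push_cast; ring
  · rw [← e2, ← Complex.exp_int_mul]; congr 1; ring

lemma cf_summable {p : ℂ} (hp : p ≠ 0) (hp1 : ‖p‖ < 1) {x : ℂ} (hx : x ≠ 0) :
    Summable (cf p x) := by
  have := sumG hp hp1 (y := -(p⁻¹ * x)) (by simp [hp, hx])
  refine this.congr fun k => ?_
  rw [cf, neg_eq_neg_one_mul, mul_zpow, mul_zpow, mul_sub, mul_one, zpow_sub₀ hp, inv_zpow]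
  ring

lemma poch_tendsto {P : ℂ} (hP : ‖P‖ < 1) : Tendsto (poch P) atTop (𝓝 (qp P P)) := by
  have := (qp_mult hP P).tendsto_prod_tprod_nat
  have h : poch P = fun n => ∏ i ∈ Finset.range n, (1 - P ^ i * P) := by
    ext n; simp [poch, pow_succ]
  rw [h]; exact this

lemma RR_tendsto {P : ℂ} (hP : ‖P‖ < 1) : Tendsto (RR P) atTop (𝓝 (qp P P)⁻¹) := by
  have h1 := (poch_tendsto hP).inv₀ (qp_ne_zero hP P hP)
  have h2 : Tendsto Int.toNat atTop atTop := by
    rw [tendsto_atTop_atTop]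
    exact fun b => ⟨b, fun a ha => by omega⟩
  refine (h1.comp h2).congr' ?_
  filter_upwards [eventually_ge_atTop 0] with m hm
  simp [RR, not_lt.2 hm]

lemma poch_bdd {P : ℂ} (hP : ‖P‖ < 1) : ∃ C : ℝ, 0 ≤ C ∧ ∀ n, ‖poch P n‖ ≤ C := by
  obtain ⟨C, hC⟩ := (poch_tendsto hP).norm.bddAbove_range
  exact ⟨C, (norm_nonneg _).trans (hC ⟨0, rfl⟩), fun n => hC ⟨n, rfl⟩⟩

lemma RR_bdd {P : ℂ} (hP : ‖P‖ < 1) : ∃ C : ℝ, 0 ≤ C ∧ ∀ n, ‖RR P n‖ ≤ C := by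
  obtain ⟨C, hC⟩ := ((poch_tendsto hP).inv₀ (qp_ne_zero hP P hP)).norm.bddAbove_range
  have h0 : 0 ≤ C := (norm_nonneg _).trans (hC ⟨0, rfl⟩)
  refine ⟨C, h0, fun n => ?_⟩
  unfold RR
  split_ifs
  · simpa using h0
  · exact hC ⟨n.toNat, rfl⟩

lemma norm_sq_lt {p : ℂ} (hp1 : ‖p‖ < 1) : ‖p ^ 2‖ < 1 := by
  rw [norm_pow]; exact pow_lt_one₀ (norm_nonneg _) hp1 two_ne_zero

lemma jtp {p : ℂ} (hp : p ≠ 0) (hp1 : ‖p‖ < 1) {x : ℂ} (hx : x ≠ 0) :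
    jtheta x (p ^ 2) = (qp (p ^ 2) (p ^ 2))⁻¹ * ∑' k : ℤ, cf p x k := by
  have hP := norm_sq_lt hp1
  set E := qp (p ^ 2) (p ^ 2) with hE
  have hE0 : E ≠ 0 := qp_ne_zero hP _ hP
  obtain ⟨C, hC0, hC⟩ := poch_bdd hP
  obtain ⟨D, hD0, hD⟩ := RR_bdd hP
  have h1 := (jtheta_mult hP x).tendsto_prod_tprod_nat
  have h2 : Tendsto (fun n : ℕ => ∑' k : ℤ, cf p x k * (poch (p ^ 2) (2 * n) *
      RR (p ^ 2) (n - k) * RR (p ^ 2) (n + k))) atTop (𝓝 (∑' k : ℤ, cf p x k * (E * E⁻¹ * E⁻¹))) := by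
    refine tendsto_tsum_of_dominated_convergence
      (bound := fun k => ‖cf p x k‖ * (C * D * D)) ?_ ?_ ?_
    · exact (cf_summable hp hp1 hx).norm.mul_right _
    · intro k
      refine Tendsto.mul tendsto_const_nhds (Tendsto.mul (Tendsto.mul ?_ ?_) ?_)
      · exact (poch_tendsto hP).comp (tendsto_id.const_mul_atTop' (by norm_num))
      · exact (RR_tendsto hP).comp
          (tendsto_atTop_add_const_right _ (-k) tendsto_natCast_atTop_atTop)
      · exact (RR_tendsto hP).comp
          (tendsto_atTop_add_const_right _ k tendsto_natCast_atTop_atTop)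
    · refine Eventually.of_forall fun n k => ?_
      rw [norm_mul, norm_mul, norm_mul]
      gcongr
      · exact hC _
      · exact hD _
      · exact hD _
  have h3 := h2.congr (fun n => (finite_jtp hp hx hP n).tsum_eq)
  have h4 := tendsto_nhds_unique h1 h3
  unfold jtheta
  rw [h4, tsum_mul_right, mul_inv_cancel₀ hE0, one_mul, mul_comm]

lemma sq_zpow (a : ℂ) (n : ℤ) : (a ^ 2) ^ n = a ^ (2 * n) := by
  rw [zpow_mul]; norm_cast

/-- Rank two form of the product `S(xy) S(x/y)`. -/
lemma prod_formula {p : ℂ} (hp : p ≠ 0) (hp1 : ‖p‖ < 1) {x y : ℂ} (hx : x ≠ 0) (hy : y ≠ 0) :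
    (∑' k : ℤ, cf p (x * y) k) * (∑' k : ℤ, cf p (x * y⁻¹) k) =
    x * ((∑' s : ℤ, (p ^ 2) ^ (s * s) * ((p ^ 2)⁻¹ * x ^ 2) ^ s) * x⁻¹ *
          (∑' t : ℤ, (p ^ 2) ^ (t * t) * (y ^ 2) ^ t) -
        (∑' t : ℤ, (p ^ 2) ^ (t * t) * (x ^ 2) ^ t) *
          ((∑' s : ℤ, (p ^ 2) ^ (s * s) * ((p ^ 2)⁻¹ * y ^ 2) ^ s) * y⁻¹)) := by
  have hP := norm_sq_lt hp1
  have hP0 : p ^ 2 ≠ 0 := pow_ne_zero _ hp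
  have sA : ∀ {x : ℂ}, x ≠ 0 → Summable (fun s : ℤ => (p ^ 2) ^ (s * s) * (x ^ 2) ^ s) :=
    fun h => sumG hP0 hP (pow_ne_zero _ h)
  have sB : ∀ {x : ℂ}, x ≠ 0 → Summable (fun s : ℤ => (p ^ 2) ^ (s * s) * ((p ^ 2)⁻¹ * x ^ 2) ^ s) :=
    fun h => sumG hP0 hP (mul_ne_zero (inv_ne_zero hP0) (pow_ne_zero _ h))
  have c1 := cf_summable hp hp1 (mul_ne_zero hx hy)
  have c2 := cf_summable hp hp1 (mul_ne_zero hx (inv_ne_zero hy))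
  have hL := (summable_mul_of_summable_norm c1.norm c2.norm).hasSum
  rw [← tsum_mul_tsum_of_summable_norm c1.norm c2.norm] at hL
  -- even part
  have hE := (summable_mul_of_summable_norm (sB hx).norm (sA hy).norm).hasSum
  rw [← tsum_mul_tsum_of_summable_norm (sB hx).norm (sA hy).norm] at hE
  -- odd part
  have hO := (summable_mul_of_summable_norm (sA hx).norm
    ((Equiv.addRight (1 : ℤ)).summable_iff.2 (sB hy)).norm).hasSum
  rw [← tsum_mul_tsum_of_summable_norm (sA hx).norm
    ((Equiv.addRight (1 : ℤ)).summable_iff.2 (sB hy)).norm] at hO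
  have e1 := (Equiv.addRight (1 : ℤ)).tsum_eq
    (fun s : ℤ => (p ^ 2) ^ (s * s) * ((p ^ 2)⁻¹ * y ^ 2) ^ s)
  have hO' := hO.mul_left (-(x * y⁻¹))
  let i0 : ℤ × ℤ → ℤ × ℤ := fun q => (q.1 + q.2, q.1 - q.2)
  let i1 : ℤ × ℤ → ℤ × ℤ := fun q => (q.1 + q.2 + 1, q.1 - q.2)
  have j0 : Function.Injective i0 := by
    rintro ⟨a, b⟩ ⟨c, d⟩ h
    simp only [i0, Prod.mk.injEq] at h ⊢
    omega
  have j1 : Function.Injective i1 := by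
    rintro ⟨a, b⟩ ⟨c, d⟩ h
    simp only [i1, Prod.mk.injEq] at h ⊢
    omega
  have hc : IsCompl (Set.range i0) (Set.range i1) := by
    constructor
    · rw [Set.disjoint_left]
      rintro _ ⟨⟨a, b⟩, rfl⟩ ⟨⟨c, d⟩, h⟩
      simp only [i0, i1, Prod.mk.injEq] at h
      omega
    · rw [codisjoint_iff_le_sup]
      rintro ⟨m, n⟩ -
      rcases Int.even_or_odd' (m + n) with ⟨k, h | h⟩
      · exact Or.inl ⟨(k, m - k), by simp only [i0, Prod.mk.injEq]; omega⟩
      · exact Or.inr ⟨(k, m - k - 1), by simp only [i1, Prod.mk.injEq]; omega⟩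
  let F : ℤ × ℤ → ℂ := fun z => cf p (x * y) z.1 * cf p (x * y⁻¹) z.2
  have hE2 : HasSum (F ∘ i0) ((∑' s : ℤ, (p ^ 2) ^ (s * s) * ((p ^ 2)⁻¹ * x ^ 2) ^ s) *
      (∑' t : ℤ, (p ^ 2) ^ (t * t) * (y ^ 2) ^ t)) := by
    suffices hh : ∀ z : ℤ × ℤ, (F ∘ i0) z = (p ^ 2) ^ (z.1 * z.1) * ((p ^ 2)⁻¹ * x ^ 2) ^ z.1 *
        ((p ^ 2) ^ (z.2 * z.2) * (y ^ 2) ^ z.2) by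
      rw [funext hh]; exact hE
    rintro ⟨s, t⟩
    simp only [F, i0, Function.comp, cf]
    have h1 : (-1 : ℂ) ^ (s + t) * (-1) ^ (s - t) = 1 := by
      rw [← zpow_add₀ (by norm_num), show s + t + (s - t) = 2 * s by ring, zpow_mul]; simp
    have h2 : p ^ ((s + t) * (s + t - 1)) * p ^ ((s - t) * (s - t - 1)) =
        (p ^ 2) ^ (s * s) * ((p ^ 2)⁻¹) ^ s * (p ^ 2) ^ (t * t) := by
      rw [inv_zpow', sq_zpow, sq_zpow, sq_zpow, ← zpow_add₀ hp, ← zpow_add₀ hp, ← zpow_add₀ hp]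
      congr 1; ring
    have h3 : (x * y) ^ (s + t) * (x * y⁻¹) ^ (s - t) = (x ^ 2) ^ s * (y ^ 2) ^ t := by
      have hx2 : x ^ (2 * s) = x ^ (s + t) * x ^ (s - t) := by
        rw [← zpow_add₀ hx]; congr 1; ring
      have hy2 : y ^ (2 * t) = y ^ (s + t) * y ^ (-(s - t)) := by
        rw [← zpow_add₀ hy]; congr 1; ring
      rw [mul_zpow, mul_zpow, inv_zpow', sq_zpow, sq_zpow]
      linear_combination (-y ^ (2 * t)) * hx2 - (x ^ (s + t) * x ^ (s - t)) * hy2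
    rw [mul_zpow (p ^ 2)⁻¹]
    calc _ = ((-1 : ℂ) ^ (s + t) * (-1) ^ (s - t)) *
          (p ^ ((s + t) * (s + t - 1)) * p ^ ((s - t) * (s - t - 1))) *
          ((x * y) ^ (s + t) * (x * y⁻¹) ^ (s - t)) := by ring
      _ = _ := by rw [h1, h2, h3]; ring
  have hO2 : HasSum (F ∘ i1) (-(x * y⁻¹) * ((∑' t : ℤ, (p ^ 2) ^ (t * t) * (x ^ 2) ^ t) *
          (∑' s : ℤ, (p ^ 2) ^ (s * s) * ((p ^ 2)⁻¹ * y ^ 2) ^ s))) := by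
    rw [← e1]
    suffices hh : ∀ z : ℤ × ℤ, (F ∘ i1) z = -(x * y⁻¹) * ((p ^ 2) ^ (z.1 * z.1) * (x ^ 2) ^ z.1 *
        ((p ^ 2) ^ ((z.2 + 1) * (z.2 + 1)) * ((p ^ 2)⁻¹ * y ^ 2) ^ (z.2 + 1))) by
      rw [funext hh]; exact hO'
    rintro ⟨s, t⟩
    simp only [F, i1, Function.comp, cf]
    have h1 : (-1 : ℂ) ^ (s + t + 1) * (-1) ^ (s - t) = -1 := by
      rw [← zpow_add₀ (by norm_num), show s + t + 1 + (s - t) = 2 * s + 1 by ring,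
        zpow_add_one₀ (by norm_num), zpow_mul]; simp
    have h2 : p ^ ((s + t + 1) * (s + t + 1 - 1)) * p ^ ((s - t) * (s - t - 1)) =
        (p ^ 2) ^ (s * s) * ((p ^ 2) ^ ((t + 1) * (t + 1)) * ((p ^ 2)⁻¹) ^ (t + 1)) := by
      rw [inv_zpow', sq_zpow, sq_zpow, sq_zpow, ← zpow_add₀ hp, ← zpow_add₀ hp, ← zpow_add₀ hp]
      congr 1; ring
    have h3 : (x * y) ^ (s + t + 1) * (x * y⁻¹) ^ (s - t) =
        x * y⁻¹ * ((x ^ 2) ^ s * (y ^ 2) ^ (t + 1)) := by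
      have hx2 : x * x ^ (2 * s) = x ^ (s + t + 1) * x ^ (s - t) := by
        rw [← zpow_add₀ hx, ← zpow_one_add₀ hx]; congr 1; ring
      have hy2 : y⁻¹ * y ^ (2 * (t + 1)) = y ^ (s + t + 1) * y ^ (-(s - t)) := by
        rw [← zpow_add₀ hy, ← zpow_neg_one, ← zpow_add₀ hy]; congr 1; ring
      rw [mul_zpow, mul_zpow, inv_zpow', sq_zpow, sq_zpow]
      linear_combination (-y⁻¹ * y ^ (2 * (t + 1))) * hx2 - (x ^ (s + t + 1) * x ^ (s - t)) * hy2
    rw [mul_zpow (p ^ 2)⁻¹]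
    calc _ = ((-1 : ℂ) ^ (s + t + 1) * (-1) ^ (s - t)) *
          (p ^ ((s + t + 1) * (s + t + 1 - 1)) * p ^ ((s - t) * (s - t - 1))) *
          ((x * y) ^ (s + t + 1) * (x * y⁻¹) ^ (s - t)) := by ring
      _ = _ := by rw [h1, h2, h3]; ring
  have hT := HasSum.add_isCompl (f := F) hc (j0.hasSum_range_iff.2 hE2) (j1.hasSum_range_iff.2 hO2)
  have := hL.unique hT
  rw [this]
  field_simp
  ring

lemma theta_rank2 {p : ℂ} (hp : p ≠ 0) (hp1 : ‖p‖ < 1) : ∃ f g : ℂ → ℂ, ∀ x y : ℂ, x ≠ 0 → y ≠ 0 →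
    f x * g y - g x * f y = x⁻¹ * (jtheta (x * y) (p ^ 2) * jtheta (x * y⁻¹) (p ^ 2)) := by
  refine ⟨fun x => (qp (p ^ 2) (p ^ 2))⁻¹ ^ 2 *
      ((∑' s : ℤ, (p ^ 2) ^ (s * s) * ((p ^ 2)⁻¹ * x ^ 2) ^ s) * x⁻¹),
    fun x => ∑' s : ℤ, (p ^ 2) ^ (s * s) * (x ^ 2) ^ s, fun x y hx hy => ?_⟩
  have h := prod_formula hp hp1 hx hy
  rw [jtp hp hp1 (mul_ne_zero hx hy), jtp hp hp1 (mul_ne_zero hx (inv_ne_zero hy))]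
  generalize (qp (p ^ 2) (p ^ 2))⁻¹ = E at *
  rw [show ∀ a b : ℂ, x⁻¹ * (E * a * (E * b)) = x⁻¹ * E ^ 2 * (a * b) by intros; ring, h]
  have : x⁻¹ * x = 1 := inv_mul_cancel₀ hx
  simp only []
  generalize (∑' s : ℤ, (p ^ 2) ^ (s * s) * ((p ^ 2)⁻¹ * x ^ 2) ^ s) = A
  generalize (∑' s : ℤ, (p ^ 2) ^ (s * s) * ((p ^ 2)⁻¹ * y ^ 2) ^ s) = B
  generalize (∑' s : ℤ, (p ^ 2) ^ (s * s) * (x ^ 2) ^ s) = C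
  generalize (∑' s : ℤ, (p ^ 2) ^ (s * s) * (y ^ 2) ^ s) = D
  linear_combination (-E ^ 2 * (A * x⁻¹ * D - C * (B * y⁻¹))) * this

lemma plucker (f g : ℂ → ℂ) (a b c d : ℂ) :
    (f a * g b - g a * f b) * (f c * g d - g c * f d) -
    (f a * g c - g a * f c) * (f b * g d - g b * f d) +
    (f a * g d - g a * f d) * (f b * g c - g b * f c) = 0 := by ring

/-- The four theta relations. -/
lemma theta_relations {p w : ℂ} (hp : p ≠ 0) (hp1 : ‖p‖ < 1) (hw : w ^ 2 + w + 1 = 0)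
    (X1 X2 X3 Y0 Y1 Y2 Y3 : ℂ)
    (hX1 : jtheta (-1) (p ^ 2) = X1) (hX2 : jtheta p (p ^ 2) = X2) (hX3 : jtheta (-p) (p ^ 2) = X3)
    (hY0 : jtheta w (p ^ 2) = Y0) (hY1 : jtheta (-w) (p ^ 2) = Y1)
    (hY2 : jtheta (p * w) (p ^ 2) = Y2) (hY3 : jtheta (-(p * w)) (p ^ 2) = Y3) :
    X1 ^ 3 * Y1 + Y0 ^ 4 = Y1 ^ 4 ∧
    X3 ^ 3 * Y3 - p * w * Y0 ^ 4 = Y3 ^ 4 ∧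
    -w * Y0 ^ 2 * X2 * Y2 - w * Y1 ^ 2 * X3 * Y3 + Y3 ^ 2 * X1 * Y1 = 0 ∧
    -X1 ^ 2 * Y3 ^ 2 + w ^ 2 * X3 ^ 2 * Y1 ^ 2 - w ^ 2 * Y0 ^ 2 * X2 ^ 2 = 0 := by
  have hw0 : w ≠ 0 := by rintro rfl; simp at hw
  have hw3 : w ^ 3 = 1 := by linear_combination (w - 1) * hw
  have hwi : w⁻¹ = w ^ 2 := inv_eq_of_mul_eq_one_right (by linear_combination hw3)
  have hP := norm_sq_lt hp1
  have hP0 : p ^ 2 ≠ 0 := pow_ne_zero _ hp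
  obtain ⟨f, g, hfg⟩ := theta_rank2 hp hp1
  -- theta values
  have tw2 : jtheta (w ^ 2) (p ^ 2) = -w ^ 2 * Y0 := by rw [← hwi, jtheta_inv hP hw0, hY0]
  have tnw2 : jtheta (-w ^ 2) (p ^ 2) = w ^ 2 * Y1 := by
    rw [show -w ^ 2 = (-w)⁻¹ by rw [inv_neg, hwi], jtheta_inv hP (neg_ne_zero.2 hw0), hY1, inv_neg, hwi]
    ring
  have tnpi : jtheta (-p⁻¹) (p ^ 2) = p⁻¹ * X3 := by
    rw [show -p⁻¹ = (-p)⁻¹ by rw [inv_neg], jtheta_inv hP (neg_ne_zero.2 hp), hX3, inv_neg]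
    ring
  have tpi : jtheta (p⁻¹) (p ^ 2) = -p⁻¹ * X2 := by
    rw [jtheta_inv hP hp, hX2]
  have tpw2 : jtheta (p * w ^ 2) (p ^ 2) = Y2 := by
    rw [← hY2, ← jtheta_symm hP hP0 (x := p * w), mul_inv, hwi]; congr 1; field_simp
  have tnpw2 : jtheta (-(p * w ^ 2)) (p ^ 2) = Y3 := by
    rw [← hY3, ← jtheta_symm hP hP0 (x := -(p * w)), inv_neg, mul_inv, hwi]; congr 1; field_simp
  have tnpwi : jtheta (-(p⁻¹ * w ^ 2)) (p ^ 2) = p⁻¹ * w ^ 2 * Y3 := by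
    rw [show -(p⁻¹ * w ^ 2) = (-(p * w))⁻¹ by rw [inv_neg, mul_inv, hwi],
      jtheta_inv hP (neg_ne_zero.2 (mul_ne_zero hp hw0)), hY3, inv_neg, mul_inv, hwi]
    ring
  have tPw : jtheta (p ^ 2 * w) (p ^ 2) = -w ^ 2 * Y0 := by
    rw [jtheta_shift hP hP0 hw0, hY0, hwi]
  have n1 : (1 : ℂ) ≠ 0 := one_ne_zero
  have nm1 : (-1 : ℂ) ≠ 0 := by norm_num
  have nnp : -p ≠ 0 := neg_ne_zero.2 hp
  have nnw : -w ≠ 0 := neg_ne_zero.2 hw0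
  have nnpw : -(p * w) ≠ 0 := neg_ne_zero.2 (mul_ne_zero hp hw0)
  have key : ∀ x y z1 z2 : ℂ, x ≠ 0 → y ≠ 0 → x * y = z1 → x * y⁻¹ = z2 →
      f x * g y - g x * f y = x⁻¹ * (jtheta z1 (p ^ 2) * jtheta z2 (p ^ 2)) := by
    rintro x y _ _ hx hy rfl rfl; exact hfg x y hx hy
  have wi4 : w ^ 4 = w := by linear_combination w * hw3
  have D1 : f 1 * g (-1) - g 1 * f (-1) = X1 ^ 2 := by
    rw [key 1 (-1) (-1) (-1) n1 nm1 (by ring) (by norm_num), hX1]; ring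
  have D2 : f w * g (-w) - g w * f (-w) = w * X1 * Y1 := by
    rw [key w (-w) (-w ^ 2) (-1) hw0 nnw (by ring) (by field_simp), hX1, tnw2, hwi]
    linear_combination X1 * Y1 * wi4
  have D3 : f 1 * g w - g 1 * f w = -w ^ 2 * Y0 ^ 2 := by
    rw [key 1 w w (w ^ 2) n1 hw0 (by ring) (by rw [hwi]; ring), hY0, tw2]; ring
  have D4 : f (-1) * g (-w) - g (-1) * f (-w) = w ^ 2 * Y0 ^ 2 := by
    rw [key (-1) (-w) w (w ^ 2) nm1 nnw (by ring) (by rw [inv_neg, hwi]; ring), hY0, tw2]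
    norm_num; ring
  have D5 : f 1 * g (-w) - g 1 * f (-w) = w ^ 2 * Y1 ^ 2 := by
    rw [key 1 (-w) (-w) (-w ^ 2) n1 nnw (by ring) (by rw [inv_neg, hwi]; ring), hY1, tnw2]; ring
  have D6 : f (-1) * g w - g (-1) * f w = -w ^ 2 * Y1 ^ 2 := by
    rw [key (-1) w (-w) (-w ^ 2) nm1 hw0 (by ring) (by rw [hwi]; ring), hY1, tnw2]
    norm_num; ring
  have D7 : f 1 * g (-p) - g 1 * f (-p) = p⁻¹ * X3 ^ 2 := by
    rw [key 1 (-p) (-p) (-p⁻¹) n1 nnp (by ring) (by rw [inv_neg]; ring), hX3, tnpi]; ring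
  have D8 : f w * g (-(p * w)) - g w * f (-(p * w)) = p⁻¹ * w ^ 2 * X3 * Y3 := by
    rw [key w (-(p * w)) (-(p * w ^ 2)) (-p⁻¹) hw0 nnpw (by ring) (by field_simp), tnpw2, tnpi, hwi]
    ring
  have D9 : f 1 * g (-(p * w)) - g 1 * f (-(p * w)) = p⁻¹ * w ^ 2 * Y3 ^ 2 := by
    rw [key 1 (-(p * w)) (-(p * w)) (-(p⁻¹ * w ^ 2)) n1 nnpw (by ring)
      (by rw [inv_neg, mul_inv, hwi]; ring), hY3, tnpwi]
    ring
  have D10 : f (-p) * g w - g (-p) * f w = -p⁻¹ * Y3 ^ 2 := by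
    rw [key (-p) w (-(p * w)) (-(p * w ^ 2)) nnp hw0 (by ring) (by rw [hwi]; ring), hY3, tnpw2, inv_neg]
    ring
  have D11 : f (-p) * g (-(p * w)) - g (-p) * f (-(p * w)) = -p⁻¹ * w * Y0 ^ 2 := by
    rw [key (-p) (-(p * w)) (p ^ 2 * w) (w ^ 2) nnp nnpw (by ring)
      (by rw [inv_neg, mul_inv, hwi]; field_simp), tPw, tw2, inv_neg]
    linear_combination (-p⁻¹ * Y0 ^ 2) * wi4
  have D12 : f (-w) * g (-(p * w)) - g (-w) * f (-(p * w)) = p⁻¹ * w ^ 2 * X2 * Y2 := by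
    rw [key (-w) (-(p * w)) (p * w ^ 2) (p⁻¹) nnw nnpw (by ring) (by field_simp), tpw2, tpi, inv_neg, hwi]
    ring
  have D13 : f (-1) * g (-p) - g (-1) * f (-p) = p⁻¹ * X2 ^ 2 := by
    rw [key (-1) (-p) p p⁻¹ nm1 nnp (by ring) (by rw [inv_neg]; ring), hX2, tpi]
    norm_num; ring
  have R4 := plucker f g 1 (-1) w (-w)
  have R3 := plucker f g 1 (-p) w (-(p * w))
  have R2 := plucker f g 1 w (-w) (-(p * w))
  have R1 := plucker f g 1 (-1) (-p) w
  rw [D1, D2, D3, D4, D5, D6] at R4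
  rw [D7, D8, D3, D11, D9, D10] at R3
  rw [D3, D12, D5, D8, D9, D2] at R2
  rw [D1, D10, D7, D6, D3, D13] at R1
  have hpp : p * p⁻¹ = 1 := mul_inv_cancel₀ hp
  generalize p⁻¹ = v at *
  refine ⟨?_, ?_, ?_, ?_⟩
  · apply mul_left_cancel₀ hw0
    linear_combination R4 - (Y0 ^ 4 - Y1 ^ 4) * wi4
  · have h : v ^ 2 * w ^ 2 * (X3 ^ 3 * Y3 - p * w * Y0 ^ 4 - Y3 ^ 4) = 0 := by
      linear_combination R3 - (v * w ^ 3 * Y0 ^ 4) * hpp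
    have := (mul_eq_zero.1 h).resolve_left (by
      refine mul_ne_zero (pow_ne_zero _ ?_) (pow_ne_zero _ hw0)
      rintro rfl; simp at hpp)
    linear_combination this
  · have h : v * (-w * Y0 ^ 2 * X2 * Y2 - w * Y1 ^ 2 * X3 * Y3 + Y3 ^ 2 * X1 * Y1) = 0 := by
      linear_combination R2 + (v * Y0 ^ 2 * X2 * Y2 + v * Y1 ^ 2 * X3 * Y3) * wi4 -
        v * Y3 ^ 2 * X1 * Y1 * hw3
    exact (mul_eq_zero.1 h).resolve_left (by rintro rfl; simp at hpp)
  · have h : v * (-X1 ^ 2 * Y3 ^ 2 + w ^ 2 * X3 ^ 2 * Y1 ^ 2 - w ^ 2 * Y0 ^ 2 * X2 ^ 2) = 0 := by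
      linear_combination R1
    exact (mul_eq_zero.1 h).resolve_left (by rintro rfl; simp at hpp)

lemma final_alg {p a b c u v w r z : ℂ} (hp : p ≠ 0) (ha : a ≠ 0) (hb : b ≠ 0) (hc : c ≠ 0)
    (hu : u ≠ 0) (hv : v ≠ 0) (hw : w ≠ 0) (hr : r ≠ 0) (habc : a * b * c = 1)
    (huvw : u * v * w = 1)
    (R4 : -8 * c ^ 6 * w + 9 * r ^ 4 = w ^ 4) (R3 : b ^ 6 * v - 9 * p * r ^ 4 = v ^ 4)
    (R2 : 3 * r ^ 2 * a ^ 2 * u - w ^ 2 * b ^ 2 * v - 2 * c ^ 2 * v ^ 2 * w = 0)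
    (R1 : -4 * c ^ 4 * v ^ 2 + b ^ 4 * w ^ 2 + 3 * a ^ 4 * r ^ 2 = 0)
    (hz : z = -2 * c ^ 2 * v / (b ^ 2 * w)) :
    p⁻¹ * a ^ 24 = 2 ^ 4 * (z - 1) ^ 2 * (z + 1) ^ 6 / (z ^ 3 * (z + 2) * (2 * z + 1)) ∧
    p ^ 2 * c ^ 24 = -(z ^ 6 * (z + 2) ^ 2) / (2 ^ 8 * (z + 1) ^ 3 * (z - 1) * (2 * z + 1)) ∧
    p * (u * r) ^ 12 = (z - 1) ^ 4 * (z + 2) * (2 * z + 1) / (3 ^ 6 * z * (z + 1) ^ 4) ∧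
    p ^ 4 * (w * r) ^ 12 = -((z - 1) * (z + 2) ^ 4 * (2 * z + 1)) / (3 ^ 6 * z ^ 4 * (z + 1)) ∧
    p * r ^ 6 = (z - 1) * (z + 2) * (2 * z + 1) / (3 ^ 3 * z * (z + 1)) := by
  have zm : z - 1 = -3 * r ^ 2 * a ^ 2 * u / (b ^ 2 * w ^ 2 * v) := by
    rw [hz]; field_simp; linear_combination R2
  have hq : 2 * c ^ 2 * v - b ^ 2 * w = a ^ 2 * v * w / u := by
    have h1 : (3 * r ^ 2 * a ^ 2) ≠ 0 := by simp [hr, ha]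
    rw [eq_div_iff hu]
    apply mul_right_cancel₀ h1
    linear_combination (2 * c ^ 2 * v - b ^ 2 * w) * R2 - v * w * R1
  have zp : z + 1 = -a ^ 2 * v / (u * b ^ 2) := by
    have : z + 1 = -(2 * c ^ 2 * v - b ^ 2 * w) / (b ^ 2 * w) := by rw [hz]; field_simp; ring
    rw [this, hq]; field_simp
  have ea : a = 1 / (b * c) := by field_simp; linear_combination habc
  have eu : u = 1 / (v * w) := by field_simp; linear_combination huvw
  have zm0 : z - 1 ≠ 0 := by rw [zm]; simp [hr, ha, hu, hb, hw, hv]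
  have z2 : z + 2 = 6 * p * r ^ 2 * w ^ 2 / (a ^ 2 * u * b ^ 4) := by
    apply mul_left_cancel₀ zm0
    have h1 : (z - 1) * (z + 2) = z * (z + 1) - 2 := by ring
    rw [h1, zp, zm, hz, ea, eu]
    field_simp
    linear_combination (-2) * R3
  have zh : 2 * z + 1 = -3 * r ^ 2 * v ^ 2 / (w ^ 2 * u ^ 2) := by
    apply mul_left_cancel₀ zm0
    have h1 : (z - 1) * (2 * z + 1) = 2 * z * z - (z + 1) := by ring
    rw [h1, zp, zm, hz, ea, eu]
    field_simp
    linear_combination (-1) * R4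
  rw [zm, zp, z2, zh, hz, ea, eu]
  refine ⟨?_, ?_, ?_, ?_, ?_⟩
  all_goals field_simp
  all_goals norm_num

lemma ep_ne {p : ℂ} (hp1 : ‖p‖ < 1) (x : ℂ) (hx : ‖x‖ < 1) : qp x (p ^ 2) ≠ 0 :=
  qp_ne_zero (norm_sq_lt hp1) x hx

lemma abc_one {p : ℂ} (hp1 : ‖p‖ < 1) :
    qp p (p ^ 2) * qp (-p) (p ^ 2) * qp (-p ^ 2) (p ^ 2) = 1 := by
  have hP := norm_sq_lt hp1
  have h1 := qp_sq hP p
  have h2 := qp_split hP (p ^ 2)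
  have h3 := qp_sq hP (p ^ 2)
  have h4 : qp (p ^ 2) (p ^ 2) ≠ 0 := ep_ne hp1 _ hP
  apply mul_left_cancel₀ h4
  rw [← pow_two] at h2
  calc _ = (qp p (p ^ 2) * qp (-p) (p ^ 2)) * (qp (p ^ 2) (p ^ 2) * qp (-p ^ 2) (p ^ 2)) := by ring
    _ = _ := by rw [h1, h3, ← h2, mul_one]

lemma E1_eq {p : ℂ} (hp1 : ‖p‖ < 1) : qp p p = qp p (p ^ 2) * qp (p ^ 2) (p ^ 2) := by
  rw [qp_split hp1 p, ← pow_two]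

lemma E4_eq {p : ℂ} (hp1 : ‖p‖ < 1) :
    qp (p ^ 4) (p ^ 4) = qp (p ^ 2) (p ^ 2) * qp (-p ^ 2) (p ^ 2) := by
  rw [qp_sq (norm_sq_lt hp1)]; ring_nf

lemma eta_eq (τ Q : ℂ) (hQ : Complex.exp (2 * Real.pi * I * τ) = Q) :
    dedekindEta τ = Complex.exp (Real.pi * I * τ / 12) * qp Q Q := by
  unfold dedekindEta qp
  congr 2
  ext j
  rw [← hQ, ← pow_succ, ← Complex.exp_nat_mul]
  congr 2
  push_cast; ring

lemma theta_cube {p x w : ℂ} (hp1 : ‖p‖ < 1) (hx : ‖x‖ < 1) (hw : w ^ 2 + w + 1 = 0) :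
    qp (x * w) (p ^ 2) * qp (x * w ^ 2) (p ^ 2) = qp (x ^ 3) ((p ^ 3) ^ 2) / qp x (p ^ 2) := by
  rw [eq_div_iff (ep_ne hp1 _ hx), mul_comm, qp_cube (norm_sq_lt hp1) x hw]
  ring_nf

lemma theta_vals {p w : ℂ} (hp : p ≠ 0) (hp1 : ‖p‖ < 1) (hw : w ^ 2 + w + 1 = 0) :
    jtheta (-1) (p ^ 2) = 2 * qp (-p ^ 2) (p ^ 2) ^ 2 ∧
    jtheta p (p ^ 2) = qp p (p ^ 2) ^ 2 ∧
    jtheta (-p) (p ^ 2) = qp (-p) (p ^ 2) ^ 2 ∧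
    jtheta w (p ^ 2) = (1 - w) * (qp ((p ^ 3) ^ 2) ((p ^ 3) ^ 2) / qp (p ^ 2) (p ^ 2)) ∧
    jtheta (-w) (p ^ 2) = (1 + w) * (qp (-(p ^ 3) ^ 2) ((p ^ 3) ^ 2) / qp (-p ^ 2) (p ^ 2)) ∧
    jtheta (p * w) (p ^ 2) = qp (p ^ 3) ((p ^ 3) ^ 2) / qp p (p ^ 2) ∧
    jtheta (-(p * w)) (p ^ 2) = qp (-p ^ 3) ((p ^ 3) ^ 2) / qp (-p) (p ^ 2) := by
  have hw0 : w ≠ 0 := by rintro rfl; simp at hw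
  have hw3 : w ^ 3 = 1 := by linear_combination (w - 1) * hw
  have hwi : w⁻¹ = w ^ 2 := inv_eq_of_mul_eq_one_right (by linear_combination hw3)
  have hP := norm_sq_lt hp1
  refine ⟨?_, ?_, ?_, ?_, ?_, ?_, ?_⟩
  · rw [jtheta_eq hP, qp_succ hP (-1), show p ^ 2 * (-1 : ℂ)⁻¹ = -p ^ 2 by norm_num,
      show p ^ 2 * (-1 : ℂ) = -p ^ 2 by ring]; ring
  · rw [jtheta_eq hP, show p ^ 2 * p⁻¹ = p by field_simp]; ring
  · rw [jtheta_eq hP, show p ^ 2 * (-p)⁻¹ = -p by field_simp]; ring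
  · have h := theta_cube hp1 hP hw
    rw [jtheta_eq hP, qp_succ hP w, hwi, mul_assoc, h]
    ring_nf
  · have h := theta_cube (x := -p ^ 2) hp1 (by simpa using hP) hw
    rw [jtheta_eq hP, qp_succ hP (-w), inv_neg, hwi, mul_assoc,
      show p ^ 2 * -w = -p ^ 2 * w by ring, show p ^ 2 * -w ^ 2 = -p ^ 2 * w ^ 2 by ring, h]
    ring_nf
  · have h := theta_cube hp1 hp1 hw
    rw [jtheta_eq hP, mul_inv, hwi, show p ^ 2 * (p⁻¹ * w ^ 2) = p * w ^ 2 by field_simp, h]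
  · have h := theta_cube (x := -p) hp1 (by simpa using hp1) hw
    rw [jtheta_eq hP, inv_neg, mul_inv, hwi,
      show p ^ 2 * -(p⁻¹ * w ^ 2) = -p * w ^ 2 by field_simp,
      show -(p * w) = -p * w by ring, h]
    ring_nf

lemma omega_rel : Complex.exp (2 * Real.pi * I / 3) ^ 2 + Complex.exp (2 * Real.pi * I / 3) + 1 = 0 := by
  have h := Complex.isPrimitiveRoot_exp 3 (by norm_num)
  have h2 := h.geom_sum_eq_zero (by norm_num)
  simp [Finset.sum_range_succ] at h2
  linear_combination h2

/-- powers of the eta quotients as rational functions of the Hauptmodul ζ. -/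
theorem phi_powers_in_terms_of_hauptmodul (τ : ℂ) (hτ : 0 < τ.im) :
    phi1 τ ^ 12
      = 2 ^ 4 * (hauptmodul τ - 1) ^ 2 * (hauptmodul τ + 1) ^ 6
        / (hauptmodul τ ^ 3 * (hauptmodul τ + 2) * (2 * hauptmodul τ + 1)) ∧
    phi2 τ ^ 12
      = -(hauptmodul τ ^ 6 * (hauptmodul τ + 2) ^ 2)
        / (2 ^ 8 * (hauptmodul τ + 1) ^ 3 * (hauptmodul τ - 1) * (2 * hauptmodul τ + 1)) ∧
    phi3 τ ^ 12
      = (hauptmodul τ - 1) ^ 4 * (hauptmodul τ + 2) * (2 * hauptmodul τ + 1)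
        / (3 ^ 6 * hauptmodul τ * (hauptmodul τ + 1) ^ 4) ∧
    phi4 τ ^ 12
      = -((hauptmodul τ - 1) * (hauptmodul τ + 2) ^ 4 * (2 * hauptmodul τ + 1))
        / (3 ^ 6 * hauptmodul τ ^ 4 * (hauptmodul τ + 1)) ∧
    phi5 τ ^ 6
      = (hauptmodul τ - 1) * (hauptmodul τ + 2) * (2 * hauptmodul τ + 1)
        / (3 ^ 3 * hauptmodul τ * (hauptmodul τ + 1)) := by
  set p := Complex.exp (Real.pi * I * τ) with hpdef
  set ω := Complex.exp (2 * Real.pi * I / 3) with hωdef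
  have hω : ω ^ 2 + ω + 1 = 0 := omega_rel
  have hω3 : ω ^ 3 = 1 := by linear_combination (ω - 1) * hω
  have hp : p ≠ 0 := Complex.exp_ne_zero _
  have hp1 : ‖p‖ < 1 := by
    rw [hpdef, Complex.norm_exp, Real.exp_lt_one_iff]
    have : (Real.pi * I * τ).re = - (Real.pi * τ.im) := by simp
    rw [this]
    have := mul_pos Real.pi_pos hτ
    linarith
  have hp3 : ‖p ^ 3‖ < 1 := by
    rw [norm_pow]; exact pow_lt_one₀ (norm_nonneg _) hp1 (by norm_num)
  obtain ⟨t1, t2, t3, s0, s1, s2, s3⟩ := theta_vals hp hp1 hω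
  obtain ⟨R4, R3, R2, R1⟩ := theta_relations hp hp1 hω _ _ _ _ _ _ _ t1 t2 t3 s0 s1 s2 s3
  have hz : hauptmodul τ = ω ^ 2 * jtheta (-1) (p ^ 2) * jtheta (-(p * ω)) (p ^ 2)
    / (jtheta (-p) (p ^ 2) * jtheta (-ω) (p ^ 2)) := rfl
  rw [t1, s3, t3, s1] at hz
  have eta1 := eta_eq (τ / 2) p (by rw [hpdef]; congr 1; ring)
  have eta2 := eta_eq τ (p ^ 2) (by rw [hpdef, ← Complex.exp_nat_mul]; congr 1; push_cast; ring)
  have eta4 := eta_eq (2 * τ) (p ^ 4) (by rw [hpdef, ← Complex.exp_nat_mul]; congr 1; push_cast; ring)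
  have eta3 := eta_eq (3 * τ / 2) (p ^ 3)
    (by rw [hpdef, ← Complex.exp_nat_mul]; congr 1; push_cast; ring)
  have eta6 := eta_eq (3 * τ) ((p ^ 3) ^ 2)
    (by rw [hpdef, ← pow_mul, ← Complex.exp_nat_mul]; congr 1; push_cast; ring)
  have eta12 := eta_eq (6 * τ) ((p ^ 3) ^ 4)
    (by rw [hpdef, ← pow_mul, ← Complex.exp_nat_mul]; congr 1; push_cast; ring)
  rw [E1_eq hp1] at eta1
  rw [E4_eq hp1] at eta4
  rw [E1_eq hp3] at eta3
  rw [E4_eq hp3] at eta12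
  have abc := abc_one hp1
  have ABC := abc_one hp3
  have e0 : qp (p ^ 2) (p ^ 2) ≠ 0 := ep_ne hp1 _ (norm_sq_lt hp1)
  have e0' : qp ((p ^ 3) ^ 2) ((p ^ 3) ^ 2) ≠ 0 := ep_ne hp3 _ (norm_sq_lt hp3)
  -- powers of the exponential prefactor
  set h := Complex.exp (Real.pi * I * τ / 24) with hh
  have x1 : Complex.exp (Real.pi * I * (τ / 2) / 12) = h := by rw [hh]; congr 1; ring
  have x2 : Complex.exp (Real.pi * I * τ / 12) = h ^ 2 := by
    rw [hh, ← Complex.exp_nat_mul]; congr 1; push_cast; ring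
  have x3 : Complex.exp (Real.pi * I * (3 * τ / 2) / 12) = h ^ 3 := by
    rw [hh, ← Complex.exp_nat_mul]; congr 1; push_cast; ring
  have x4 : Complex.exp (Real.pi * I * (2 * τ) / 12) = h ^ 4 := by
    rw [hh, ← Complex.exp_nat_mul]; congr 1; push_cast; ring
  have x6 : Complex.exp (Real.pi * I * (3 * τ) / 12) = h ^ 6 := by
    rw [hh, ← Complex.exp_nat_mul]; congr 1; push_cast; ring
  have x12 : Complex.exp (Real.pi * I * (6 * τ) / 12) = h ^ 12 := by
    rw [hh, ← Complex.exp_nat_mul]; congr 1; push_cast; ring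
  have hph : p = h ^ 24 := by
    rw [hpdef, hh, ← Complex.exp_nat_mul]; congr 1; push_cast; ring
  have h0 : h ≠ 0 := Complex.exp_ne_zero _
  rw [x1] at eta1
  rw [x2] at eta2
  rw [x3] at eta3
  rw [x4] at eta4
  rw [x6] at eta6
  rw [x12] at eta12
  unfold phi1 phi2 phi3 phi4 phi5
  rw [eta1, eta2, eta3, eta4, eta6, eta12]
  clear_value p ω h
  generalize qp p (p ^ 2) = a at *
  generalize qp (-p) (p ^ 2) = b at *
  generalize qp (-p ^ 2) (p ^ 2) = c at *
  generalize qp (p ^ 2) (p ^ 2) = e at *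
  generalize qp (p ^ 3) ((p ^ 3) ^ 2) = A at *
  generalize qp (-p ^ 3) ((p ^ 3) ^ 2) = B at *
  generalize qp (-(p ^ 3) ^ 2) ((p ^ 3) ^ 2) = C at *
  generalize qp ((p ^ 3) ^ 2) ((p ^ 3) ^ 2) = e' at *
  generalize hauptmodul τ = z at *
  have ha : a ≠ 0 := by rintro rfl; simp at abc
  have hb : b ≠ 0 := by rintro rfl; simp at abc
  have hc : c ≠ 0 := by rintro rfl; simp at abc
  have hA : A ≠ 0 := by rintro rfl; simp at ABC
  have hB : B ≠ 0 := by rintro rfl; simp at ABC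
  have hC : C ≠ 0 := by rintro rfl; simp at ABC
  have o1 : (1 + ω) = - ω ^ 2 := by linear_combination hω
  have o2 : (1 - ω) ^ 2 = - 3 * ω := by linear_combination hω
  have ω0 : ω ≠ 0 := by rintro rfl; simp at hω
  have huvw : (A / a) * (B / b) * (C / c) = 1 := by
    rw [show (A / a) * (B / b) * (C / c) = (A * B * C) / (a * b * c) by field_simp, ABC, abc]; simp
  have o4 : (1 - ω) ^ 4 = 9 * ω ^ 2 := by
    rw [show (1 - ω) ^ 4 = ((1 - ω) ^ 2) ^ 2 by ring, o2]; ring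
  rw [o1] at R4 R2 R1 hz
  have hz' : z = -2 * c ^ 2 * (B / b) / (b ^ 2 * (C / c)) := by
    rw [hz]; field_simp
  have hu0 : A / a ≠ 0 := div_ne_zero hA ha
  have hv0 : B / b ≠ 0 := div_ne_zero hB hb
  have hw0 : C / c ≠ 0 := div_ne_zero hC hc
  have hr0 : e' / e ≠ 0 := div_ne_zero e0' e0
  have hAa : A = (A / a) * a := by field_simp
  have hCc : C = (C / c) * c := by field_simp
  have hee : e' = (e' / e) * e := by field_simp
  generalize A / a = u at *
  generalize B / b = v at *
  generalize C / c = w at *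
  generalize e' / e = r at *
  subst hAa hCc hee
  simp only [mul_pow] at R4 R3 R2 R1
  rw [o4] at R4 R3
  rw [o2] at R2 R1
  have F4 : -8 * c ^ 6 * w + 9 * r ^ 4 = w ^ 4 := by
    apply mul_left_cancel₀ (pow_ne_zero 2 ω0)
    linear_combination R4 + w ^ 4 * (ω ^ 5 + ω ^ 2) * hω3
  have F3 : b ^ 6 * v - 9 * p * r ^ 4 = v ^ 4 := by
    linear_combination R3 + 9 * p * r ^ 4 * hω3
  have F2 : 3 * r ^ 2 * a ^ 2 * u - w ^ 2 * b ^ 2 * v - 2 * c ^ 2 * v ^ 2 * w = 0 := by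
    apply mul_left_cancel₀ (pow_ne_zero 2 ω0)
    linear_combination R2 + w ^ 2 * b ^ 2 * v * ω ^ 2 * hω3
  have F1 : -4 * c ^ 4 * v ^ 2 + b ^ 4 * w ^ 2 + 3 * a ^ 4 * r ^ 2 = 0 := by
    linear_combination R1 - (b ^ 4 * w ^ 2 * (ω ^ 3 + 1) + 3 * a ^ 4 * r ^ 2) * hω3
  obtain ⟨g1, g2, g3, g4, g5⟩ := final_alg hp ha hb hc hu0 hv0 hw0 hr0 abc huvw F4 F3 F2 F1 hz'
  rw [← g1, ← g2, ← g3, ← g4, ← g5, hph]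
  refine ⟨?_, ?_, ?_, ?_, ?_⟩
  all_goals field_simp
end

section
/- Picard's algebraic solution in the ζ-parametrization: define t(ζ) = ζ(ζ+2)³/(2ζ+1)³, q(ζ) = ζ(ζ+2)/(2ζ+1), and p(ζ) = (2ζ+1)/(2(1−ζ)(ζ+2)). Then (i) q⁴ − 4tq³ + 6tq² − 4tq + t² = 0 identically in ζ; and (ii) for all ζ ∈ ℂ ∖ {0, 1, −1, −2, −1/2}, with the operator δ = [ζ(ζ+1)(ζ−1)(ζ+2)/(2(2ζ+1)²)]·d/dζ and the Painlevé VI Hamiltonian H with parameters α0 = α1 = α3 = α4 = 0, α2 = 1/2, one has δ(q)(ζ) = (∂H/∂p)(q(ζ),p(ζ),t(ζ)) and δ(p)(ζ) = −(∂H/∂q)(q(ζ),p(ζ),t(ζ)). -/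
/-- The Painlevé VI Hamiltonian. -/
noncomputable def PVIHamiltonian (α0 α1 α2 α3 α4 q p t : ℂ) : ℂ :=
  q * (q - 1) * (q - t) * p ^ 2
    - ((α0 - 1) * q * (q - 1) + α3 * q * (q - t) + α4 * (q - 1) * (q - t)) * p
    + α2 * (α1 + α2) * (q - t)

/-- t(ζ) for Picard's algebraic solution. -/
noncomputable def picardT (ζ : ℂ) : ℂ := ζ * (ζ + 2) ^ 3 / (2 * ζ + 1) ^ 3

/-- q(ζ) for Picard's algebraic solution. -/
noncomputable def picardQ (ζ : ℂ) : ℂ := ζ * (ζ + 2) / (2 * ζ + 1)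

/-- p(ζ) for Picard's algebraic solution. -/
noncomputable def picardP (ζ : ℂ) : ℂ := (2 * ζ + 1) / (2 * (1 - ζ) * (ζ + 2))

/-- Picard's algebraic solution in the ζ-parametrization solves
the quartic equation and the Painlevé VI Hamiltonian system with
α₀ = α₁ = α₃ = α₄ = 0, α₂ = 1/2. -/
theorem picard_solution :
    (∀ ζ : ℂ, ζ ∉ ({0, 1, -1, -2, -(1/2)} : Set ℂ) →
      picardQ ζ ^ 4 - 4 * picardT ζ * picardQ ζ ^ 3 + 6 * picardT ζ * picardQ ζ ^ 2
        - 4 * picardT ζ * picardQ ζ + picardT ζ ^ 2 = 0) ∧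
    (∀ ζ : ℂ, ζ ∉ ({0, 1, -1, -2, -(1/2)} : Set ℂ) →
      ζ * (ζ + 1) * (ζ - 1) * (ζ + 2) / (2 * (2 * ζ + 1) ^ 2) * deriv picardQ ζ
        = deriv (fun p' => PVIHamiltonian 0 0 (1/2) 0 0 (picardQ ζ) p' (picardT ζ))
            (picardP ζ) ∧
      ζ * (ζ + 1) * (ζ - 1) * (ζ + 2) / (2 * (2 * ζ + 1) ^ 2) * deriv picardP ζ
        = - deriv (fun q' => PVIHamiltonian 0 0 (1/2) 0 0 q' (picardP ζ) (picardT ζ))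
            (picardQ ζ)) := by
  have key : ∀ ζ : ℂ, ζ ∉ ({0, 1, -1, -2, -(1/2)} : Set ℂ) →
      1 - ζ ≠ 0 ∧ ζ + 2 ≠ 0 ∧ 2 * ζ + 1 ≠ 0 := by
    intro ζ h
    simp only [Set.mem_insert_iff, Set.mem_singleton_iff, not_or] at h
    obtain ⟨_, h1, _, h2, h3⟩ := h
    refine ⟨fun e => h1 ?_, fun e => h2 ?_, fun e => h3 ?_⟩
    · linear_combination -e
    · linear_combination e
    · linear_combination e / 2
  refine ⟨fun ζ h => ?_, fun ζ h => ?_⟩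
  · obtain ⟨h1, h2, h3⟩ := key ζ h
    unfold picardQ picardT
    field_simp
    ring
  · obtain ⟨h1, h2, h3⟩ := key ζ h
    have hid : HasDerivAt (fun z : ℂ => z) 1 ζ := hasDerivAt_id ζ
    have hl : HasDerivAt (fun z : ℂ => 2 * z + 1) (2 * 1) ζ :=
      (hid.const_mul 2).add_const 1
    have hQ : HasDerivAt picardQ _ ζ := (hid.mul (hid.add_const 2)).div hl h3
    have hP : HasDerivAt picardP _ ζ :=
      hl.div (((hid.const_sub 1).const_mul 2).mul (hid.add_const 2))
        (mul_ne_zero (mul_ne_zero two_ne_zero h1) h2)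
    have hHp : ∀ q p t : ℂ, HasDerivAt (fun p' => PVIHamiltonian 0 0 (1/2) 0 0 q p' t)
        (2 * q * (q - 1) * (q - t) * p + q * (q - 1)) p := by
      intro q p t
      have hx : HasDerivAt (fun z : ℂ => z) 1 p := hasDerivAt_id p
      have := (((hx.pow 2).const_mul (q * (q - 1) * (q - t))).add
        (hx.const_mul (q * (q - 1)))).add_const (1 / 4 * (q - t))
      refine (this.congr_of_eventuallyEq (Filter.Eventually.of_forall fun z => ?_)).congr_deriv ?_
      · simp only [PVIHamiltonian, Pi.add_apply, Pi.mul_apply, Pi.pow_apply]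
        ring
      push_cast
      ring
    have hHq : ∀ q p t : ℂ, HasDerivAt (fun q' => PVIHamiltonian 0 0 (1/2) 0 0 q' p t)
        ((3 * q ^ 2 - 2 * (1 + t) * q + t) * p ^ 2 + (2 * q - 1) * p + 1 / 4) q := by
      intro q p t
      have hx : HasDerivAt (fun z : ℂ => z) 1 q := hasDerivAt_id q
      have := ((((hx.mul (hx.sub_const 1)).mul (hx.sub_const t)).mul_const (p ^ 2)).add
        ((hx.mul (hx.sub_const 1)).mul_const p)).add
        ((hx.sub_const t).const_mul (1 / 4))
      refine (this.congr_of_eventuallyEq (Filter.Eventually.of_forall fun z => ?_)).congr_deriv ?_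
      · simp only [PVIHamiltonian, Pi.add_apply, Pi.mul_apply, Pi.pow_apply]
        ring
      simp only [Pi.mul_apply]
      push_cast
      ring
    have hQ' : deriv picardQ ζ = (2 * ζ ^ 2 + 2 * ζ + 2) / (2 * ζ + 1) ^ 2 := by
      rw [hQ.deriv]
      simp only [Pi.mul_apply]
      congr 1
      ring
    rw [hQ', hP.deriv, (hHp _ _ _).deriv, (hHq _ _ _).deriv]
    unfold picardQ picardT picardP
    have h4 : ζ * 2 + 1 ≠ 0 := by rwa [mul_comm]
    constructor
    · field_simp
      ring
    · field_simp
      ring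
end

section
/- Invariance of the eta quotients under the congruence group K: let a, b, c, d be integers with ad − bc = 1, a ≡ d ≡ ±1 (mod 12), b ≡ 0 (mod 24), and c ≡ 0 (mod 72). Then for every τ in the complex upper half-plane and every j ∈ {1,2,3,4,5}, φ_j((aτ+b)/(cτ+d)) = φ_j(τ). -/
open Complex

open ModularForm in
theorem dedekindEta_eq (z : ℂ) : dedekindEta z = ModularForm.eta z := by
  unfold dedekindEta ModularForm.eta
  congr 1
  · unfold Function.Periodic.qParam
    congr 1
    push_cast
    ring
  · refine tprod_congr fun j => ?_
    rw [eta_q_eq_cexp]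

theorem dedekindEta_ne_zero {z : ℂ} (hz : 0 < z.im) : dedekindEta z ≠ 0 := by
  rw [dedekindEta_eq]; exact ModularForm.eta_ne_zero hz

theorem dedekindEta_add_nat (z : ℂ) (n : ℕ) :
    dedekindEta (z + n) = Complex.exp ((Real.pi : ℂ) * Complex.I * n / 12) * dedekindEta z := by
  unfold dedekindEta
  rw [← mul_assoc, ← Complex.exp_add]
  congr 1
  · congr 1; ring
  · refine tprod_congr fun j => ?_
    congr 1
    rw [show 2 * (Real.pi : ℂ) * Complex.I * (j + 1) * (z + n)
      = 2 * (Real.pi : ℂ) * Complex.I * (j + 1) * z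
        + (((j + 1) * n : ℕ) : ℂ) * (2 * (Real.pi : ℂ) * Complex.I) by push_cast; ring]
    exact (Complex.exp_periodic.nat_mul _) _

theorem dedekindEta_S {z : ℂ} (hz : 0 < z.im) :
    dedekindEta (-1 / z) = (sqrt I)⁻¹ * (sqrt z * dedekindEta z) := by
  have := ModularForm.eta_comp_eq_csqrt_I_inv (show z ∈ UpperHalfPlane.upperHalfPlaneSet from hz)
  simpa [dedekindEta_eq] using this

noncomputable def GG (N : ℕ) (z : ℂ) : ℂ := dedekindEta (N * z) / dedekindEta z

noncomputable def zz (N : ℕ) : ℂ := Complex.exp ((Real.pi : ℂ) * Complex.I * (N - 1) / 12)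

theorem zz_ne (N : ℕ) : zz N ≠ 0 := Complex.exp_ne_zero _

theorem im_nat_mul {N : ℕ} (hN : 0 < N) {z : ℂ} (hz : 0 < z.im) : 0 < ((N : ℂ) * z).im := by
  have : (0 : ℝ) < N := by exact_mod_cast hN
  simp; positivity

theorem GG_ne {N : ℕ} (hN : 0 < N) {z : ℂ} (hz : 0 < z.im) : GG N z ≠ 0 :=
  div_ne_zero (dedekindEta_ne_zero (im_nat_mul hN hz)) (dedekindEta_ne_zero hz)

theorem GG_T (N : ℕ) {z : ℂ} (hz : 0 < z.im) : GG N (z + 1) = zz N * GG N z := by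
  unfold GG zz
  have h1 := dedekindEta_add_nat z 1
  have h2 := dedekindEta_add_nat (N * z) N
  rw [show (N : ℂ) * (z + 1) = N * z + N by ring, h2]
  rw [show z + 1 = z + (1 : ℕ) by simp, h1]
  have := dedekindEta_ne_zero hz
  rw [show (Real.pi : ℂ) * Complex.I * (N - 1) / 12 = (Real.pi : ℂ) * Complex.I * N / 12
    - (Real.pi : ℂ) * Complex.I * (1 : ℕ) / 12 by push_cast; ring, Complex.exp_sub]
  field_simp

theorem neg_inv_im {z : ℂ} (hz : 0 < z.im) : 0 < (-1 / z).im := by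
  have h0 : z ≠ 0 := by rintro rfl; simp at hz
  have : 0 < Complex.normSq z := Complex.normSq_pos.2 h0
  rw [neg_div, one_div, Complex.neg_im, Complex.inv_im]
  rw [neg_div, neg_neg]
  positivity

theorem GG_W {N : ℕ} (hN : 0 < N) {z : ℂ} (hz : 0 < z.im) :
    GG N (-1 / (N * z)) * GG N z = (sqrt (N : ℂ))⁻¹ := by
  have h0 : z ≠ 0 := by rintro rfl; simp at hz
  have hN0 : (N : ℂ) ≠ 0 := by exact_mod_cast hN.ne'
  unfold GG
  rw [show (N : ℂ) * (-1 / (N * z)) = -1 / z by field_simp, dedekindEta_S hz,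
    dedekindEta_S (im_nat_mul hN hz)]
  have e1 := dedekindEta_ne_zero hz
  have e2 := dedekindEta_ne_zero (im_nat_mul hN hz)
  have e3 : sqrt (N * z) = sqrt (N : ℂ) * sqrt z := by
    have hNr : (0 : ℝ) < N := by exact_mod_cast hN
    have hl := Complex.log_ofReal_mul hNr h0
    have hl2 := Complex.ofReal_log hNr.le
    push_cast at hl hl2
    rw [sqrt_eq_exp (mul_ne_zero hN0 h0), sqrt_eq_exp hN0, sqrt_eq_exp h0, ← Complex.exp_add, hl,
      hl2]
    congr 1
    ring
  have e4 : sqrt I ≠ 0 := by simp [sqrt]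
  have e5 : sqrt z ≠ 0 := by simp [sqrt, h0]
  have e6 : sqrt (N : ℂ) ≠ 0 := by simp [sqrt, hN0]
  rw [e3]
  field_simp

theorem GG_U {N : ℕ} (hN : 0 < N) {z : ℂ} (hz : 0 < z.im) :
    GG N (z / (N * z + 1)) = zz N * GG N z := by
  have h0 : z ≠ 0 := by rintro rfl; simp at hz
  have hN0 : (N : ℂ) ≠ 0 := by exact_mod_cast hN.ne'
  have hNz := im_nat_mul hN hz
  have hd : (N : ℂ) * z + 1 ≠ 0 := by
    intro h
    have := congrArg Complex.im h
    simp at this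
    rcases this with h | h
    · omega
    · exact hz.ne' h
  set w := -1 / ((N : ℂ) * z) with hw
  have hwim : 0 < w.im := neg_inv_im hNz
  have hw1 : 0 < (w - 1).im := by simpa using hwim
  have a1 := GG_W hN hz
  have a2 := GG_W hN hw1
  have a3 := GG_T N hw1
  rw [sub_add_cancel] at a3
  have e : -1 / ((N : ℂ) * (w - 1)) = z / (N * z + 1) := by
    have : w - 1 = - (N * z + 1) / (N * z) := by rw [hw]; field_simp; ring
    rw [this]; field_simp
  rw [e] at a2
  rw [← hw, a3] at a1
  have := GG_ne hN hw1
  apply mul_right_cancel₀ this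
  rw [a2, ← a1]; ring

/-- transformation law -/
def QQ (N : ℕ) (a b e d : ℤ) (k : ℤ) : Prop :=
  ∀ z : ℂ, 0 < z.im → GG N ((a * z + b) / (N * e * z + d)) = zz N ^ k * GG N z

theorem den_ne {a b c d : ℤ} (h : a * d - b * c = 1) {z : ℂ} (hz : 0 < z.im) :
    (c : ℂ) * z + d ≠ 0 := by
  intro h1
  have h2 := congrArg Complex.im h1
  have h3 := congrArg Complex.re h1
  simp at h2 h3
  rcases h2 with h2 | h2
  · subst h2; simp at h3; subst h3; simp at h
  · exact hz.ne' h2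

theorem mob_im {a b c d : ℤ} (h : a * d - b * c = 1) {z : ℂ} (hz : 0 < z.im) :
    0 < (((a : ℂ) * z + b) / ((c : ℂ) * z + d)).im := by
  have hd := den_ne h hz
  have hp : 0 < Complex.normSq ((c : ℂ) * z + d) := Complex.normSq_pos.2 hd
  have hR : (a : ℝ) * d - b * c = 1 := by exact_mod_cast h
  have : (((a : ℂ) * z + b) / ((c : ℂ) * z + d)).im = z.im / Complex.normSq ((c : ℂ) * z + d) := by
    rw [Complex.div_im]
    simp
    rw [← sub_div]
    congr 1
    linear_combination z.im * hR
  rw [this]; positivity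

theorem mob_im' {N : ℕ} {a b e d : ℤ} (h : a * d - N * b * e = 1) {z : ℂ} (hz : 0 < z.im) :
    0 < (((a : ℂ) * z + b) / (N * e * z + d)).im := by
  have := mob_im (a := a) (b := b) (c := N * e) (d := d) (by linarith) hz
  simpa using this

theorem den_ne' {N : ℕ} {a b e d : ℤ} (h : a * d - N * b * e = 1) {z : ℂ} (hz : 0 < z.im) :
    (N * e * z + d : ℂ) ≠ 0 := by
  have := den_ne (a := a) (b := b) (c := N * e) (d := d) (by linarith) hz
  simpa using this

theorem QQ_T {N : ℕ} {a b e d k : ℤ} (h : a * d - N * b * e = 1) :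
    QQ N (a + N * e) (b + d) e d (k + 1) ↔ QQ N a b e d k := by
  refine forall₂_congr fun z hz => ?_
  have h1 := GG_T N (mob_im' h hz)
  have hd := den_ne' h hz
  have e1 : ((a + N * e : ℤ) * z + (b + d : ℤ)) / (N * e * z + d)
      = (a * z + b) / (N * e * z + d) + 1 := by
    push_cast; field_simp; ring
  rw [e1, h1, zpow_add_one₀ (zz_ne N), mul_comm (zz N ^ k), mul_assoc (zz N)]
  exact mul_right_inj' (zz_ne N)

theorem QQ_U {N : ℕ} (hN : 0 < N) {a b e d k : ℤ} (h : a * d - N * b * e = 1) :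
    QQ N a b (e + a) (d + N * b) (k + 1) ↔ QQ N a b e d k := by
  refine forall₂_congr fun z hz => ?_
  have h1 := GG_U hN (mob_im' h hz)
  have hd := den_ne' h hz
  have hd' : (N * (e + a : ℤ) * z + (d + N * b : ℤ) : ℂ) ≠ 0 :=
    den_ne' (a := a) (b := b) (by linarith) hz
  push_cast at hd'
  have e1 : (a * z + b) / (N * (e + a : ℤ) * z + (d + N * b : ℤ))
      = ((a * z + b) / (N * e * z + d)) / (N * ((a * z + b) / (N * e * z + d)) + 1) := by
    have : N * ((a * z + b) / (N * e * z + d)) + 1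
      = (N * (e + a) * z + (d + N * b)) / (N * e * z + d) := by
      rw [eq_div_iff hd, add_mul, mul_assoc, div_mul_cancel₀ _ hd]; ring
    rw [this, div_div_div_cancel_right₀ hd]
    push_cast
    rfl
  rw [e1, h1, zpow_add_one₀ (zz_ne N), mul_comm (zz N ^ k), mul_assoc (zz N)]
  exact mul_right_inj' (zz_ne N)

theorem QQ_nat (N : ℕ) (b : ℕ) : QQ N 1 b 0 1 b := by
  induction b with
  | zero => intro z hz; simp
  | succ n ih =>
    have := (QQ_T (N := N) (a := 1) (b := n) (e := 0) (d := 1) (k := n) (by simp)).2 ih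
    simpa using this

theorem QQ_int (N : ℕ) (b : ℤ) : QQ N 1 b 0 1 b := by
  induction b with
  | zero => exact QQ_nat N 0
  | succ n ih => exact_mod_cast QQ_nat N (n + 1)
  | pred n ih =>
    have := (QQ_T (N := N) (a := 1) (b := -n - 1) (e := 0) (d := 1) (k := -n - 1) (by simp)).1
      (by simpa using ih)
    simpa using this

theorem QQ_neg (N : ℕ) (b : ℤ) : QQ N (-1) b 0 (-1) (-b) := by
  intro z hz
  have := QQ_int N (-b) z hz
  rw [← this]
  congr 1
  push_cast
  simp
  ring

theorem euclid (N : ℕ) (hN : N = 2 ∨ N = 3) (P : ℤ → ℤ → ℤ → ℤ → Prop)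
    (h1 : ∀ b, P 1 b 0 1) (h2 : ∀ b, P (-1) b 0 (-1))
    (hT : ∀ a b e d : ℤ, a * d - N * b * e = 1 → (P (a + N * e) (b + d) e d ↔ P a b e d))
    (hU : ∀ a b e d : ℤ, a * d - N * b * e = 1 → (P a b (e + a) (d + N * b) ↔ P a b e d))
    (n : ℕ) : ∀ a b e d : ℤ, a * d - N * b * e = 1 → |a| + |e| ≤ n → P a b e d := by
  induction n with
  | zero =>
    intro a b e d h hle
    have ha : a = 0 := abs_eq_zero.1 (by have := abs_nonneg a; have := abs_nonneg e; push_cast at hle; omega)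
    have he : e = 0 := abs_eq_zero.1 (by have := abs_nonneg a; have := abs_nonneg e; push_cast at hle; omega)
    subst ha he; simp at h
  | succ n ih =>
    intro a b e d h hle
    push_cast at hle
    by_cases he : e = 0
    · subst he
      have : a * d = 1 := by simpa using h
      rcases Int.mul_eq_one_iff_eq_one_or_neg_one.1 this with ⟨rfl, rfl⟩ | ⟨rfl, rfl⟩
      · exact h1 b
      · exact h2 b
    have ha : a ≠ 0 := by
      rintro rfl
      have : (N : ℤ) ∣ 1 := ⟨-(b * e), by linarith⟩
      rcases hN with rfl | rfl <;> norm_num at this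
    have key : |a + N * e| < |a| ∨ |a - N * e| < |a| ∨ |e + a| < |e| ∨ |e - a| < |e| := by
      rcases hN with rfl | rfl <;> push_cast <;> grind
    rcases key with k | k | k | k
    · exact (hT a b e d h).1 (ih _ _ _ _ (by linarith) (by omega))
    · have h' : (a - N * e) * d - N * (b - d) * e = 1 := by linarith
      have := (hT (a - N * e) (b - d) e d h').2 (ih _ _ _ _ h' (by omega))
      simpa using this
    · exact (hU a b e d h).1 (ih _ _ _ _ (by linarith) (by omega))
    · have h' : a * (d - N * b) - N * b * (e - a) = 1 := by linarith
      have := (hU a b (e - a) (d - N * b) h').2 (ih _ _ _ _ h' (by omega))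
      simpa using this

def f3four (a b e d : ZMod 4) : ZMod 4 :=
  (1 - (3 * e) ^ 2) * (b * d - d + 3 * e * d + 1) + (a + d + 1) * (3 * e) ^ 3

def RR3 (a b e d k : ℤ) : Prop :=
  (k : ZMod 4) = f3four a b e d + (if (a : ZMod 3) = 1 then 0 else 2) ∧
  (k : ZMod 3) = a * b + a * e

def RR2 (a b e d k : ℤ) : Prop :=
  (k : ZMod 4) = d * (b + e) ∧
  (k : ZMod 3) = (a + d) * (2 * e) - b * d * (4 * e ^ 2 - 1)

theorem cast_det {N : ℕ} {a b e d : ℤ} (h : a * d - N * b * e = 1) (m : ℕ) :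
    (a * d - N * b * e : ZMod m) = 1 := by exact_mod_cast congrArg (Int.cast : ℤ → ZMod m) h

theorem RR3_T {a b e d k : ℤ} (h : a * d - (3 : ℕ) * b * e = 1) :
    RR3 (a + (3 : ℕ) * e) (b + d) e d (k + 1) ↔ RR3 a b e d k := by
  have h4 := cast_det h 4
  have h3 := cast_det h 3
  unfold RR3
  have k4 : ∀ a b e d : ZMod 4, a * d - (3 : ℕ) * b * e = 1 →
    f3four (a + (3 : ℕ) * e) (b + d) e d = f3four a b e d + 1 := by decide
  have k3 : ∀ a b e d : ZMod 3, a * d - (3 : ℕ) * b * e = 1 →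
    (a + (3 : ℕ) * e) * (b + d) + (a + (3 : ℕ) * e) * e = a * b + a * e + 1 := by decide
  have z3 : ∀ a e : ZMod 3, a + (3 : ℕ) * e = a := by decide
  have k4 := k4 _ _ _ _ h4
  have k3 := k3 _ _ _ _ h3
  simp only [Int.cast_add, Int.cast_mul, Int.cast_natCast, Int.cast_one] at *
  rw [k4, k3, z3, add_right_comm, add_left_inj, add_left_inj]

theorem RR3_U {a b e d k : ℤ} (h : a * d - (3 : ℕ) * b * e = 1) :
    RR3 a b (e + a) (d + (3 : ℕ) * b) (k + 1) ↔ RR3 a b e d k := by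
  have h4 := cast_det h 4
  have h3 := cast_det h 3
  unfold RR3
  have k4 : ∀ a b e d : ZMod 4, a * d - (3 : ℕ) * b * e = 1 →
    f3four a b (e + a) (d + (3 : ℕ) * b) = f3four a b e d + 1 := by decide
  have k3 : ∀ a b e d : ZMod 3, a * d - (3 : ℕ) * b * e = 1 →
    a * b + a * (e + a) = a * b + a * e + 1 := by decide
  have k4 := k4 _ _ _ _ h4
  have k3 := k3 _ _ _ _ h3
  simp only [Int.cast_add, Int.cast_mul, Int.cast_natCast, Int.cast_one] at *
  rw [k4, k3, add_right_comm, add_left_inj, add_left_inj]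

theorem RR2_T {a b e d k : ℤ} (h : a * d - (2 : ℕ) * b * e = 1) :
    RR2 (a + (2 : ℕ) * e) (b + d) e d (k + 1) ↔ RR2 a b e d k := by
  have h4 := cast_det h 4
  have h3 := cast_det h 3
  unfold RR2
  have k4 : ∀ a b e d : ZMod 4, a * d - (2 : ℕ) * b * e = 1 →
    d * (b + d + e) = d * (b + e) + 1 := by decide
  have k3 : ∀ a b e d : ZMod 3, a * d - (2 : ℕ) * b * e = 1 →
    (a + (2 : ℕ) * e + d) * (2 * e) - (b + d) * d * (4 * e ^ 2 - 1) =
    (a + d) * (2 * e) - b * d * (4 * e ^ 2 - 1) + 1 := by decide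
  have k4 := k4 _ _ _ _ h4
  have k3 := k3 _ _ _ _ h3
  simp only [Int.cast_add, Int.cast_mul, Int.cast_natCast, Int.cast_one] at *
  rw [k4, k3, add_left_inj, add_left_inj]

theorem RR2_U {a b e d k : ℤ} (h : a * d - (2 : ℕ) * b * e = 1) :
    RR2 a b (e + a) (d + (2 : ℕ) * b) (k + 1) ↔ RR2 a b e d k := by
  have h4 := cast_det h 4
  have h3 := cast_det h 3
  unfold RR2
  have k4 : ∀ a b e d : ZMod 4, a * d - (2 : ℕ) * b * e = 1 →
    (d + (2 : ℕ) * b) * (b + (e + a)) = d * (b + e) + 1 := by decide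
  have k3 : ∀ a b e d : ZMod 3, a * d - (2 : ℕ) * b * e = 1 →
    (a + (d + (2 : ℕ) * b)) * (2 * (e + a)) - b * (d + (2 : ℕ) * b) * (4 * (e + a) ^ 2 - 1) =
    (a + d) * (2 * e) - b * d * (4 * e ^ 2 - 1) + 1 := by decide
  have k4 := k4 _ _ _ _ h4
  have k3 := k3 _ _ _ _ h3
  simp only [Int.cast_add, Int.cast_mul, Int.cast_natCast, Int.cast_one] at *
  rw [k4, k3, add_left_inj, add_left_inj]

theorem exists_shift {A B : ℤ → Prop} (h : ∀ k, A (k + 1) ↔ B k) : (∃ k, A k) ↔ ∃ k, B k :=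
  ⟨fun ⟨k, hk⟩ => ⟨k - 1, (h _).1 (by simpa using hk)⟩, fun ⟨k, hk⟩ => ⟨k + 1, (h k).2 hk⟩⟩

theorem main3 (a b e d : ℤ) (h : a * d - (3 : ℕ) * b * e = 1) :
    ∃ k, RR3 a b e d k ∧ QQ 3 a b e d k := by
  refine euclid 3 (Or.inr rfl) (fun a b e d => ∃ k, RR3 a b e d k ∧ QQ 3 a b e d k)
    (fun b => ⟨b, ?_, QQ_int 3 b⟩) (fun b => ⟨-b, ?_, QQ_neg 3 b⟩)
    (fun a b e d h => exists_shift fun k => and_congr (RR3_T h) (QQ_T h))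
    (fun a b e d h => exists_shift fun k => and_congr (RR3_U h) (QQ_U (by norm_num) h))
    (|a| + |e|).toNat a b e d h (Int.self_le_toNat _)
  · simp [RR3, f3four]
  · have h4 : ∀ b : ZMod 4, -b = f3four (-1) b 0 (-1) + 2 := by decide
    have h3 : ¬ ((-1 : ZMod 3) = 1) := by decide
    constructor
    · push_cast; rw [if_neg h3]; exact h4 b
    · simp

theorem main2 (a b e d : ℤ) (h : a * d - (2 : ℕ) * b * e = 1) :
    ∃ k, RR2 a b e d k ∧ QQ 2 a b e d k := by
  refine euclid 2 (Or.inl rfl) (fun a b e d => ∃ k, RR2 a b e d k ∧ QQ 2 a b e d k)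
    (fun b => ⟨b, ?_, QQ_int 2 b⟩) (fun b => ⟨-b, ?_, QQ_neg 2 b⟩)
    (fun a b e d h => exists_shift fun k => and_congr (RR2_T h) (QQ_T h))
    (fun a b e d h => exists_shift fun k => and_congr (RR2_U h) (QQ_U (by norm_num) h))
    (|a| + |e|).toNat a b e d h (Int.self_le_toNat _)
  · simp [RR2]
  · simp [RR2]

theorem dvd12 {k : ℤ} (h4 : (k : ZMod 4) = 0) (h3 : (k : ZMod 3) = 0) : (12 : ℤ) ∣ k := by
  have := (ZMod.intCast_zmod_eq_zero_iff_dvd k 4).1 h4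
  have := (ZMod.intCast_zmod_eq_zero_iff_dvd k 3).1 h3
  omega

theorem inv3 {a b e d : ℤ} (h : a * d - 3 * b * e = 1)
    (had : (a ≡ 1 [ZMOD 12] ∧ d ≡ 1 [ZMOD 12]) ∨ (a ≡ -1 [ZMOD 12] ∧ d ≡ -1 [ZMOD 12]))
    (hb : (12 : ℤ) ∣ b) (he : (12 : ℤ) ∣ e) {z : ℂ} (hz : 0 < z.im) :
    GG 3 ((a * z + b) / (3 * e * z + d)) = GG 3 z := by
  obtain ⟨k, ⟨r4, r3⟩, q⟩ := main3 a b e d (by exact_mod_cast h)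
  have b4 : (b : ZMod 4) = 0 := (ZMod.intCast_zmod_eq_zero_iff_dvd b 4).2 (by push_cast; omega)
  have b3 : (b : ZMod 3) = 0 := (ZMod.intCast_zmod_eq_zero_iff_dvd b 3).2 (by push_cast; omega)
  have e4 : (e : ZMod 4) = 0 := (ZMod.intCast_zmod_eq_zero_iff_dvd e 4).2 (by push_cast; omega)
  have e3 : (e : ZMod 3) = 0 := (ZMod.intCast_zmod_eq_zero_iff_dvd e 3).2 (by push_cast; omega)
  have hk : (12 : ℤ) ∣ k := by
    apply dvd12
    · rw [r4, b4, e4]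
      unfold f3four
      rcases had with ⟨ha, hd⟩ | ⟨ha, hd⟩
      · have a3 : (a : ZMod 3) = 1 := by
          exact_mod_cast (ZMod.intCast_eq_intCast_iff a 1 3).2 (ha.of_dvd (by norm_num))
        have d4 : (d : ZMod 4) = 1 := by
          exact_mod_cast (ZMod.intCast_eq_intCast_iff d 1 4).2 (hd.of_dvd (by norm_num))
        rw [if_pos a3, d4]; simp
      · have a3 : (a : ZMod 3) = -1 := by
          exact_mod_cast (ZMod.intCast_eq_intCast_iff a (-1) 3).2 (ha.of_dvd (by norm_num))
        have d4 : (d : ZMod 4) = -1 := by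
          exact_mod_cast (ZMod.intCast_eq_intCast_iff d (-1) 4).2 (hd.of_dvd (by norm_num))
        rw [a3, if_neg (by decide), d4]; simp; decide
    · rw [r3, b3, e3]; simp
  obtain ⟨m, rfl⟩ := hk
  have := q z hz
  have hz1 : zz 3 ^ (12 * m) = 1 := by
    unfold zz
    rw [← Complex.exp_int_mul, Complex.exp_eq_one_iff]
    exact ⟨m, by push_cast; ring⟩
  rw [hz1, one_mul] at this
  exact_mod_cast this

theorem inv2 {a b e d : ℤ} (h : a * d - 2 * b * e = 1)
    (hb : (12 : ℤ) ∣ b) (he : (12 : ℤ) ∣ e) {z : ℂ} (hz : 0 < z.im) :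
    GG 2 ((a * z + b) / (2 * e * z + d)) ^ 2 = GG 2 z ^ 2 := by
  obtain ⟨k, ⟨r4, r3⟩, q⟩ := main2 a b e d (by exact_mod_cast h)
  have b4 : (b : ZMod 4) = 0 := (ZMod.intCast_zmod_eq_zero_iff_dvd b 4).2 (by push_cast; omega)
  have b3 : (b : ZMod 3) = 0 := (ZMod.intCast_zmod_eq_zero_iff_dvd b 3).2 (by push_cast; omega)
  have e4 : (e : ZMod 4) = 0 := (ZMod.intCast_zmod_eq_zero_iff_dvd e 4).2 (by push_cast; omega)
  have e3 : (e : ZMod 3) = 0 := (ZMod.intCast_zmod_eq_zero_iff_dvd e 3).2 (by push_cast; omega)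
  have hk : (12 : ℤ) ∣ k := by
    apply dvd12
    · rw [r4, b4, e4]; simp
    · rw [r3, b3, e3]; simp
  obtain ⟨m, rfl⟩ := hk
  have := q z hz
  have hz1 : (zz 2 ^ (12 * m)) ^ 2 = 1 := by
    unfold zz
    rw [← Complex.exp_int_mul, ← Complex.exp_nat_mul, Complex.exp_eq_one_iff]
    exact ⟨m, by push_cast; ring⟩
  have e : GG 2 ((a * z + b) / (2 * e * z + d)) = zz 2 ^ (12 * m) * GG 2 z := by
    exact_mod_cast this
  rw [e, mul_pow, hz1, one_mul]

theorem phi_invariant_under_K (a b c d : ℤ) (hdet : a * d - b * c = 1)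
    (had : (a ≡ 1 [ZMOD 12] ∧ d ≡ 1 [ZMOD 12]) ∨ (a ≡ -1 [ZMOD 12] ∧ d ≡ -1 [ZMOD 12]))
    (hb : (24 : ℤ) ∣ b) (hc : (72 : ℤ) ∣ c)
    (τ : ℂ) (hτ : 0 < τ.im) :
    phi1 (((a : ℂ) * τ + b) / ((c : ℂ) * τ + d)) = phi1 τ ∧
    phi2 (((a : ℂ) * τ + b) / ((c : ℂ) * τ + d)) = phi2 τ ∧
    phi3 (((a : ℂ) * τ + b) / ((c : ℂ) * τ + d)) = phi3 τ ∧
    phi4 (((a : ℂ) * τ + b) / ((c : ℂ) * τ + d)) = phi4 τ ∧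
    phi5 (((a : ℂ) * τ + b) / ((c : ℂ) * τ + d)) = phi5 τ := by
  obtain ⟨b, rfl⟩ := hb
  obtain ⟨c, rfl⟩ := hc
  have hden := den_ne hdet hτ
  push_cast at hden
  have p1 : ∀ z, phi1 z = (GG 2 (z / 2) ^ 2)⁻¹ := by
    intro z; unfold phi1 GG; rw [div_pow, inv_div]; push_cast; rw [mul_div_cancel₀ z two_ne_zero]
  have p2 : ∀ z, phi2 z = GG 2 z ^ 2 := by
    intro z; unfold phi2 GG; rw [div_pow]; push_cast; rfl
  have p3 : ∀ z, phi3 z = GG 3 (z / 2) := by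
    intro z; unfold phi3 GG; push_cast; rw [mul_div_assoc]
  have p4 : ∀ z, phi4 z = GG 3 (2 * z) := by
    intro z; unfold phi4 GG; push_cast; rw [← mul_assoc]; norm_num
  have p5 : ∀ z, phi5 z = GG 3 z := by
    intro z; unfold phi5 GG; push_cast; rfl
  have h2 : 0 < (τ / 2).im := by simpa using hτ
  have h2' : 0 < (2 * τ).im := by simpa using hτ
  rw [p1, p1, p2, p2, p3, p3, p4, p4, p5, p5]
  refine ⟨?_, ?_, ?_, ?_, ?_⟩
  · rw [← inv2 (a := a) (b := 12 * b) (e := 72 * c) (d := d) (by linarith) ⟨b, rfl⟩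
      ⟨6 * c, by ring⟩ h2]
    congr 3
    push_cast
    rw [show 2 * (72 * c : ℂ) * (τ / 2) + d = 72 * c * τ + d by ring]
    ring
  · rw [← inv2 (a := a) (b := 24 * b) (e := 36 * c) (d := d) (by linarith) ⟨2 * b, by ring⟩
      ⟨3 * c, by ring⟩ hτ]
    congr 2
    push_cast
    ring
  · rw [← inv3 (a := a) (b := 12 * b) (e := 48 * c) (d := d) (by linarith) had ⟨b, by ring⟩
      ⟨4 * c, by ring⟩ h2]
    congr 1
    push_cast
    rw [show 3 * (48 * c : ℂ) * (τ / 2) + d = 72 * c * τ + d by ring]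
    ring
  · rw [← inv3 (a := a) (b := 48 * b) (e := 12 * c) (d := d) (by linarith) had ⟨4 * b, by ring⟩
      ⟨c, by ring⟩ h2']
    congr 1
    push_cast
    rw [show 3 * (12 * c : ℂ) * (2 * τ) + d = 72 * c * τ + d by ring]
    ring
  · rw [← inv3 (a := a) (b := 24 * b) (e := 24 * c) (d := d) (by linarith) had ⟨2 * b, by ring⟩
      ⟨2 * c, by ring⟩ hτ]
    congr 1
    push_cast
    ring
end
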